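/- arXiv:2209.11684 — 3 statements merged into one kernel-verified Lean document; each statement's English description precedes it below -/
import Mathlib

section
/- Let Φ : M_d → M_d be a unital quantum channel, Φ* its adjoint with respect to the trace inner product, and let ρ, ω be positive definite density matrices. Then D(ρ ‖ Φ*Φ(ω)) ≤ (H(ρ) − H(Φ(ρ))) + D(ρ ‖ ω), where D(ρ‖σ) = tr(ρ log ρ − ρ log σ) is the quantum relative entropy and H(ρ) = tr(ρ log ρ). -/
open Matrix
open scoped ComplexOrder

noncomputable section

variable {d : ℕ}

/-- Matrix logarithm of a Hermitian matrix via spectral decomposition (junk value `0`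
otherwise). -/
def mlog (A : Matrix (Fin d) (Fin d) ℂ) : Matrix (Fin d) (Fin d) ℂ :=
  if hA : A.IsHermitian then
    (hA.eigenvectorUnitary : Matrix (Fin d) (Fin d) ℂ) *
      Matrix.diagonal (fun i => (Real.log (hA.eigenvalues i) : ℂ)) *
      star (hA.eigenvectorUnitary : Matrix (Fin d) (Fin d) ℂ)
  else 0

/-- The ampliation `id_n ⊗ Φ` acting on block matrices. -/
def ampliation (Φ : Matrix (Fin d) (Fin d) ℂ →ₗ[ℂ] Matrix (Fin d) (Fin d) ℂ) (n : ℕ)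
    (M : Matrix (Fin n × Fin d) (Fin n × Fin d) ℂ) : Matrix (Fin n × Fin d) (Fin n × Fin d) ℂ :=
  fun p q => Φ (Matrix.of fun a b => M (p.1, a) (q.1, b)) p.2 q.2

/-- Complete positivity. -/
def IsCompletelyPositive (Φ : Matrix (Fin d) (Fin d) ℂ →ₗ[ℂ] Matrix (Fin d) (Fin d) ℂ) : Prop :=
  ∀ n : ℕ, ∀ M : Matrix (Fin n × Fin d) (Fin n × Fin d) ℂ,
    M.PosSemidef → (ampliation Φ n M).PosSemidef

/-- The entropy functional `H(ρ) = tr(ρ log ρ)`. -/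
def vnEnt (A : Matrix (Fin d) (Fin d) ℂ) : ℝ := ((A * mlog A).trace).re

/-- Quantum relative entropy `D(ρ‖σ) = tr(ρ log ρ − ρ log σ)`. -/
def relEnt (ρ σ : Matrix (Fin d) (Fin d) ℂ) : ℝ := ((ρ * mlog ρ - ρ * mlog σ).trace).re

/-!
By definition `D(ρ ‖ Φ*Φ(ω)) = H(ρ) - tr ρ log Φ*Φ(ω)`. Operator concavity of the logarithm bounds
`tr ρ log Φ*Φ(ω)` below by `tr ρ Φ*(log Φ(ω)) = tr Φ(ρ) log Φ(ω) = H(Φ(ρ)) - D(Φ(ρ) ‖ Φ(ω))`, and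
`D(Φ(ρ) ‖ Φ(ω)) ≤ D(ρ ‖ ω)` by monotonicity of the relative entropy.

Each of these two logarithmic inequalities is an integral over `t ≥ 0` of a comparison of
resolvents. For concavity it is Choi's inequality `Φ*(A)⁻¹ ≤ Φ*(A⁻¹)` at `A = Φ(ω) + t`. For
monotonicity, `-D(ρ ‖ σ)` is the expectation of `log Δ` in the vector `ρ ^ (1 / 2)`, where
`Δ = L_σ R_ρ⁻¹` is the relative modular operator, and the expectation of `(Δ + t)⁻¹` is the maximum
over `X` of a concave quadratic form; the Schwarz inequality for `Φ*` makes these forms comparable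
under `X = Φ*(Y)`.
-/

section LogComparison

open Filter Topology

variable {ι κ : Type*} [Fintype ι] [Fintype κ]

lemma hasDerivAt_sum_mul_log_add (w a : ι → ℝ) {t : ℝ} (h : ∀ i, a i + t ≠ 0) :
    HasDerivAt (fun s => ∑ i, w i * Real.log (a i + s)) (∑ i, w i / (a i + t)) t := by
  refine HasDerivAt.fun_sum fun i _ => ?_
  simpa [div_eq_mul_inv] using (((hasDerivAt_id t).const_add (a i)).log (h i)).const_mul (w i)

lemma tendsto_sum_mul_log_add_sub (w a : ι → ℝ) :
    Tendsto (fun t => ∑ i, w i * Real.log (a i + t) - (∑ i, w i) * Real.log t) atTop (𝓝 0) := by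
  have h : Tendsto (fun t => ∑ i, w i * (Real.log (t + a i) - Real.log t)) atTop
      (𝓝 (∑ i, w i * 0)) :=
    tendsto_finsetSum _ fun i _ => (Real.tendsto_log_comp_add_sub_log (a i)).const_mul (w i)
  simpa only [mul_zero, Finset.sum_const_zero, mul_sub, Finset.sum_sub_distrib, ← Finset.sum_mul,
    add_comm] using h

/-- The difference of the two sides, with `log (a + t)` in place of `log a`, is monotone in `t`
by the resolvent inequality and tends to `0` as `t → ∞` because the total weights agree. -/
lemma sum_mul_log_le_of_resolvent_le {w a : ι → ℝ} {v b : κ → ℝ}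
    (ha : ∀ i, 0 < a i) (hb : ∀ k, 0 < b k) (hsum : ∑ i, w i = ∑ k, v k)
    (h : ∀ t, 0 ≤ t → ∑ i, w i / (a i + t) ≤ ∑ k, v k / (b k + t)) :
    ∑ k, v k * Real.log (b k) ≤ ∑ i, w i * Real.log (a i) := by
  set g : ℝ → ℝ := fun t =>
    ∑ i, w i * Real.log (a i + t) - ∑ k, v k * Real.log (b k + t) with hg
  have hderiv (t : ℝ) (ht : 0 ≤ t) :
      HasDerivAt g (∑ i, w i / (a i + t) - ∑ k, v k / (b k + t)) t :=
    (hasDerivAt_sum_mul_log_add w a fun i => (add_pos_of_pos_of_nonneg (ha i) ht).ne').sub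
      (hasDerivAt_sum_mul_log_add v b fun k => (add_pos_of_pos_of_nonneg (hb k) ht).ne')
  have hanti : AntitoneOn g (Set.Ici 0) := by
    refine antitoneOn_of_hasDerivWithinAt_nonpos (convex_Ici 0)
      (fun t ht => (hderiv t ht).continuousAt.continuousWithinAt)
      (fun t ht => (hderiv t (interior_subset ht)).hasDerivWithinAt)
      fun t ht => sub_nonpos.mpr (h t (interior_subset ht))
  have hlim : Tendsto g atTop (𝓝 0) := by
    simpa only [hsum, sub_sub_sub_cancel_right, sub_zero] using
      (tendsto_sum_mul_log_add_sub w a).sub (tendsto_sum_mul_log_add_sub v b)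
  have h0 : 0 ≤ g 0 := le_of_tendsto hlim <|
    (eventually_ge_atTop 0).mono fun t ht => hanti Set.self_mem_Ici ht ht
  simpa only [hg, add_zero, sub_nonneg] using h0

end LogComparison

section TraceDuality

variable {m n : Type*} [Fintype m] [Fintype n]

open scoped MatrixOrder in
lemma trace_mul_nonneg {A B : Matrix n n ℂ} (hA : A.PosSemidef) (hB : B.PosSemidef) :
    0 ≤ (A * B).trace := by
  classical
  obtain ⟨C, rfl⟩ := CStarAlgebra.nonneg_iff_eq_star_mul_self.mp hB.nonneg
  rw [← mul_assoc, trace_mul_comm, ← mul_assoc]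
  exact (hA.mul_mul_conjTranspose_same C).trace_nonneg

lemma posSemidef_of_forall_trace_mul_nonneg {A : Matrix n n ℂ}
    (h : ∀ B : Matrix n n ℂ, B.PosSemidef → 0 ≤ (A * B).trace) : A.PosSemidef := by
  classical
  rw [← isPositive_toEuclideanLin_iff, LinearMap.isPositive_iff_complex]
  intro x
  have hx : 0 ≤ inner ℂ (toEuclideanLin A x) x := by
    rw [← inner_conj_symm, starRingEnd_apply, star_nonneg_iff,
      EuclideanSpace.inner_eq_star_dotProduct]
    simpa [mul_vecMulVec, trace_vecMulVec, dotProduct_comm] using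
      h _ (posSemidef_vecMulVec_self_star x.ofLp)
  obtain ⟨hre, him⟩ := Complex.nonneg_iff.mp hx
  exact ⟨Complex.ext rfl him, hre⟩

lemma posSemidef_of_forall_re_trace_mul_nonneg {A : Matrix n n ℂ} (hA : A.IsHermitian)
    (h : ∀ B : Matrix n n ℂ, B.PosSemidef → 0 ≤ (A * B).trace.re) : A.PosSemidef := by
  refine posSemidef_of_forall_trace_mul_nonneg fun B hB => Complex.nonneg_iff.mpr ⟨h B hB, ?_⟩
  have hreal : star (A * B).trace = (A * B).trace := by
    rw [← trace_conjTranspose, conjTranspose_mul, hA.eq, hB.1.eq, trace_mul_comm]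
  exact (Complex.conj_eq_iff_im.mp hreal).symm

lemma posSemidef_map_of_trace_adjoint {f : Matrix m m ℂ → Matrix n n ℂ}
    {g : Matrix n n ℂ → Matrix m m ℂ} (hadj : ∀ a b, (f a * b).trace = (a * g b).trace)
    (hg : ∀ B, B.PosSemidef → (g B).PosSemidef) {A : Matrix m m ℂ} (hA : A.PosSemidef) :
    (f A).PosSemidef :=
  posSemidef_of_forall_trace_mul_nonneg fun B hB => hadj A B ▸ trace_mul_nonneg hA (hg B hB)

lemma map_one_of_trace_adjoint [DecidableEq m] [DecidableEq n]
    {f : Matrix m m ℂ → Matrix n n ℂ} {g : Matrix n n ℂ → Matrix m m ℂ}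
    (hadj : ∀ a b, (f a * b).trace = (a * g b).trace) (hg : ∀ b, (g b).trace = b.trace) :
    f 1 = 1 :=
  ext_iff_trace_mul_right.mpr fun b => by rw [hadj, one_mul, one_mul, hg]

end TraceDuality

section PositiveMaps

variable {m n : Type*}

/-- Positive maps between matrix algebras: positive semidefinite matrices go to positive
semidefinite matrices. -/
def IsPositiveMap (Ψ : Matrix m m ℂ →ₗ[ℂ] Matrix n n ℂ) : Prop :=
  ∀ ⦃A : Matrix m m ℂ⦄, A.PosSemidef → (Ψ A).PosSemidef

/-- Maps satisfying the Kadison–Schwarz inequality `Ψ(Y)* Ψ(Y) ≤ Ψ(Y* Y)`, a property between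
positivity and complete positivity of unital maps. -/
def IsSchwarzMap [Fintype m] [Fintype n] (Ψ : Matrix m m ℂ →ₗ[ℂ] Matrix n n ℂ) : Prop :=
  ∀ Y : Matrix m m ℂ, (Ψ (Yᴴ * Y) - (Ψ Y)ᴴ * Ψ Y).PosSemidef

variable {Ψ : Matrix m m ℂ →ₗ[ℂ] Matrix n n ℂ}

open scoped MatrixOrder in
lemma IsSchwarzMap.isPositiveMap [Fintype m] [Fintype n] (hΨ : IsSchwarzMap Ψ) :
    IsPositiveMap Ψ := by
  classical
  intro A hA
  obtain ⟨Y, rfl⟩ := CStarAlgebra.nonneg_iff_eq_star_mul_self.mp hA.nonneg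
  simpa only [star_eq_conjTranspose, sub_add_cancel] using
    (hΨ Y).add (posSemidef_conjTranspose_mul_self (Ψ Y))

open scoped MatrixOrder in
lemma IsPositiveMap.map_conjTranspose [Finite m] (hΨ : IsPositiveMap Ψ) (Y : Matrix m m ℂ) :
    Ψ Yᴴ = (Ψ Y)ᴴ := by
  classical
  have := Fintype.ofFinite m
  have hY : Y ∈ Submodule.span ℂ {A : Matrix m m ℂ | 0 ≤ A} :=
    CStarAlgebra.span_nonneg (A := Matrix m m ℂ) ▸ Submodule.mem_top
  induction hY using Submodule.span_induction with
  | mem A hA =>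
    have hA : A.PosSemidef := nonneg_iff_posSemidef.mp hA
    rw [hA.1.eq, (hΨ hA).1.eq]
  | zero => simp only [conjTranspose_zero, map_zero]
  | add A B _ _ hA hB => rw [conjTranspose_add, map_add, map_add, conjTranspose_add, hA, hB]
  | smul c A _ hA => rw [conjTranspose_smul, map_smul, map_smul, conjTranspose_smul, hA]

open scoped MatrixOrder in
lemma exists_posSemidef_sub_smul_one [Finite m] [DecidableEq m] {A : Matrix m m ℂ}
    (hA : A.PosDef) : ∃ ε : ℝ, 0 < ε ∧ (A - ε • 1).PosSemidef := by
  have := Fintype.ofFinite m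
  cases subsingleton_or_nontrivial (Matrix m m ℂ)
  · exact ⟨1, one_pos, Subsingleton.elim 0 (A - _) ▸ .zero⟩
  obtain ⟨ε, hε, h⟩ := (CFC.exists_pos_algebraMap_le_iff (a := A) hA.1).mpr
    fun _ hx => hA.isStrictlyPositive.spectrum_pos hx
  refine ⟨ε, hε, ?_⟩
  simpa only [Algebra.algebraMap_eq_smul_one, le_iff] using h

lemma IsPositiveMap.posDef_map [Finite m] [DecidableEq m] (hΨ : IsPositiveMap Ψ)
    (h1 : (Ψ 1).PosDef) {A : Matrix m m ℂ} (hA : A.PosDef) : (Ψ A).PosDef := by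
  obtain ⟨ε, hε, h⟩ := exists_posSemidef_sub_smul_one hA
  have hΨA : Ψ A = Ψ (A - ε • 1) + ε • Ψ 1 := by
    rw [map_sub, LinearMap.map_smul_of_tower, sub_add_cancel]
  rw [hΨA]
  exact PosDef.posSemidef_add (hΨ h) (h1.smul hε)

lemma posSemidef_fromBlocks_inv_smul [Finite m] {A : Matrix m m ℂ} (hA : A.PosSemidef) {a : ℝ}
    (ha : 0 < a) : (fromBlocks (a⁻¹ • A) A A (a • A)).PosSemidef := by
  classical
  have := Fintype.ofFinite m
  have h := (hA.conjTranspose_mul_mul_same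
    (fromCols (1 : Matrix m m ℂ) (a • (1 : Matrix m m ℂ)))).smul (inv_nonneg.mpr ha.le)
  rw [conjTranspose_fromCols_eq_fromRows_conjTranspose, fromRows_mul, fromRows_mul_fromCols,
    fromBlocks_smul] at h
  simpa [smul_smul, ha.ne'] using h

end PositiveMaps

section CompletePositivity

variable {Φ Φad : Matrix (Fin d) (Fin d) ℂ →ₗ[ℂ] Matrix (Fin d) (Fin d) ℂ}

lemma trace_ampliation_mul (hadj : ∀ a b, (Φad a * b).trace = (a * Φ b).trace) (n : ℕ)
    (M N : Matrix (Fin n × Fin d) (Fin n × Fin d) ℂ) :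
    (ampliation Φad n M * N).trace = (M * ampliation Φ n N).trace := by
  have hblocks (M N : Matrix (Fin n × Fin d) (Fin n × Fin d) ℂ) : (M * N).trace =
      ∑ i, ∑ j,
        (M.submatrix (Prod.mk i) (Prod.mk j) * N.submatrix (Prod.mk j) (Prod.mk i)).trace := by
    simp only [trace, diag_apply, mul_apply, Fintype.sum_prod_type, submatrix_apply]
    exact Finset.sum_congr rfl fun i _ => Finset.sum_comm
  have hampliation (Ψ : Matrix (Fin d) (Fin d) ℂ →ₗ[ℂ] Matrix (Fin d) (Fin d) ℂ)
      (M : Matrix (Fin n × Fin d) (Fin n × Fin d) ℂ) (i j : Fin n) :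
      (ampliation Ψ n M).submatrix (Prod.mk i) (Prod.mk j) =
        Ψ (M.submatrix (Prod.mk i) (Prod.mk j)) := rfl
  simp only [hblocks, hampliation, hadj]

lemma IsCompletelyPositive.traceAdjoint (hΦ : IsCompletelyPositive Φ)
    (hadj : ∀ a b, (Φad a * b).trace = (a * Φ b).trace) : IsCompletelyPositive Φad :=
  fun n _ => posSemidef_map_of_trace_adjoint (trace_ampliation_mul hadj n) (hΦ n)

lemma IsCompletelyPositive.posSemidef_fromBlocks (hΦ : IsCompletelyPositive Φ)
    {A B C D : Matrix (Fin d) (Fin d) ℂ} (h : (fromBlocks A B C D).PosSemidef) :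
    (fromBlocks (Φ A) (Φ B) (Φ C) (Φ D)).PosSemidef := by
  have hM := hΦ 2 _ (h.submatrix fun p : Fin 2 × Fin d => ![Sum.inl p.2, Sum.inr p.2] p.1)
  convert hM.submatrix (Sum.elim (Prod.mk 0) (Prod.mk 1)) using 1
  ext (i | i) (j | j) <;> rfl

lemma IsCompletelyPositive.isSchwarzMap (hΦ : IsCompletelyPositive Φ) (h1 : Φ 1 = 1) :
    IsSchwarzMap Φ := by
  intro Y
  have hM : (fromBlocks (Yᴴ * Y) Yᴴ Y 1).PosSemidef := by
    simpa only [conjTranspose_fromCols_eq_fromRows_conjTranspose, fromRows_mul_fromCols,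
      conjTranspose_one, one_mul, mul_one] using
      posSemidef_conjTranspose_mul_self (fromCols Y (1 : Matrix (Fin d) (Fin d) ℂ))
  have hΦM := hΦ.posSemidef_fromBlocks hM
  have hstar : Φ Yᴴ = (Φ Y)ᴴ := (isHermitian_fromBlocks_iff.mp hΦM.1).2.2.1.symm
  rw [h1, hstar] at hΦM
  have : Invertible (1 : Matrix (Fin d) (Fin d) ℂ) := invertibleOne
  simpa using (PosDef.fromBlocks₂₂ _ (Φ Y)ᴴ PosDef.one).mp (by simpa using hΦM)

end CompletePositivity

section EigenProjections

variable {n : Type*} [Fintype n] [DecidableEq n] {A : Matrix n n ℂ}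

/-- The rank-one orthogonal projection onto the line of the `i`-th vector of the eigenbasis
attached to a Hermitian matrix. -/
def eigenProj (hA : A.IsHermitian) (i : n) : Matrix n n ℂ :=
  vecMulVec (hA.eigenvectorBasis i) (star (hA.eigenvectorBasis i : n → ℂ))

lemma posSemidef_eigenProj (hA : A.IsHermitian) (i : n) : (eigenProj hA i).PosSemidef :=
  posSemidef_vecMulVec_self_star _

lemma sum_smul_eigenProj (hA : A.IsHermitian) (f : n → ℝ) :
    ∑ i, f i • eigenProj hA i = (hA.eigenvectorUnitary : Matrix n n ℂ) *
      diagonal (fun i => (f i : ℂ)) * star (hA.eigenvectorUnitary : Matrix n n ℂ) := by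
  ext a b
  rw [Matrix.sum_apply, mul_apply]
  refine Finset.sum_congr rfl fun i _ => ?_
  rw [mul_diagonal, star_apply, hA.eigenvectorUnitary_apply, hA.eigenvectorUnitary_apply,
    Matrix.smul_apply, Complex.real_smul, eigenProj, vecMulVec_apply, Pi.star_apply]
  ring

lemma sum_eigenProj (hA : A.IsHermitian) : ∑ i, eigenProj hA i = 1 := by
  simpa using sum_smul_eigenProj hA 1

lemma sum_eigenvalues_smul_eigenProj (hA : A.IsHermitian) :
    ∑ i, hA.eigenvalues i • eigenProj hA i = A := by
  rw [sum_smul_eigenProj]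
  exact hA.spectral_theorem.symm

lemma mul_eigenProj (hA : A.IsHermitian) (i : n) :
    A * eigenProj hA i = hA.eigenvalues i • eigenProj hA i := by
  rw [eigenProj, mul_vecMulVec, hA.mulVec_eigenvectorBasis, smul_vecMulVec]

lemma eigenProj_mul (hA : A.IsHermitian) (i : n) :
    eigenProj hA i * A = hA.eigenvalues i • eigenProj hA i := by
  have h := congr_arg conjTranspose (mul_eigenProj hA i)
  rwa [conjTranspose_mul, conjTranspose_smul, hA.eq, (posSemidef_eigenProj hA i).1.eq,
    star_trivial] at h

lemma inv_add_smul_one (hA : A.IsHermitian) {t : ℝ} (ht : ∀ i, hA.eigenvalues i + t ≠ 0) :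
    (A + t • 1)⁻¹ = ∑ i, (hA.eigenvalues i + t)⁻¹ • eigenProj hA i := by
  refine inv_eq_right_inv ?_
  simp only [Finset.mul_sum, mul_smul_comm, add_mul, mul_eigenProj, smul_mul_assoc, one_mul,
    ← add_smul, smul_smul, inv_mul_cancel₀ (ht _), one_smul, sum_eigenProj]

lemma mlog_eq_sum {A : Matrix (Fin d) (Fin d) ℂ} (hA : A.IsHermitian) :
    mlog A = ∑ i, Real.log (hA.eigenvalues i) • eigenProj hA i := by
  rw [mlog, dif_pos hA, sum_smul_eigenProj]

lemma isHermitian_mlog (A : Matrix (Fin d) (Fin d) ℂ) : (mlog A).IsHermitian := by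
  by_cases hA : A.IsHermitian
  · rw [mlog_eq_sum hA]
    exact isSelfAdjoint_sum _ fun i _ => (IsSelfAdjoint.all _).smul (posSemidef_eigenProj hA i).1
  · rw [mlog, dif_neg hA]
    exact isHermitian_zero

end EigenProjections

section Jensen

variable {m n : Type*} [Fintype m] [DecidableEq m] [Fintype n] [DecidableEq n]
  {Ψ : Matrix m m ℂ →ₗ[ℂ] Matrix n n ℂ}

/-- Choi's inequality. In terms of `A = ∑ aᵢ Pᵢ`, the block matrix `[[Ψ A⁻¹, 1], [1, Ψ A]]` is the
sum of the positive semidefinite matrices `[[aᵢ⁻¹, 1], [1, aᵢ]] ⊗ Ψ Pᵢ`; take its Schur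
complement. -/
lemma IsPositiveMap.posSemidef_map_inv_sub_inv_map (hΨ : IsPositiveMap Ψ) (h1 : Ψ 1 = 1)
    {A : Matrix m m ℂ} (hA : A.PosDef) : (Ψ A⁻¹ - (Ψ A)⁻¹).PosSemidef := by
  have hΨA : (Ψ A).PosDef := hΨ.posDef_map (h1 ▸ .one) hA
  have hinv : A⁻¹ = ∑ i, (hA.1.eigenvalues i)⁻¹ • eigenProj hA.1 i := by
    simpa using inv_add_smul_one hA.1 (t := 0) (by simpa using fun i => (hA.eigenvalues_pos i).ne')
  have hsum : fromBlocks (Ψ A⁻¹) 1 1 (Ψ A) =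
      ∑ i, fromBlocks ((hA.1.eigenvalues i)⁻¹ • Ψ (eigenProj hA.1 i)) (Ψ (eigenProj hA.1 i))
        (Ψ (eigenProj hA.1 i)) (hA.1.eigenvalues i • Ψ (eigenProj hA.1 i)) := by
    have hA' : Ψ A = Ψ (∑ i, hA.1.eigenvalues i • eigenProj hA.1 i) := by
      rw [sum_eigenvalues_smul_eigenProj]
    rw [hinv, hA', ← h1, ← sum_eigenProj hA.1]
    simp only [map_sum, LinearMap.map_smul_of_tower]
    ext (i | i) (j | j) <;> simp only [Matrix.sum_apply, fromBlocks_apply₁₁, fromBlocks_apply₁₂,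
      fromBlocks_apply₂₁, fromBlocks_apply₂₂]
  have hblocks : (fromBlocks (Ψ A⁻¹) 1 1ᴴ (Ψ A)).PosSemidef := by
    rw [conjTranspose_one, hsum]
    exact posSemidef_sum _ fun i _ =>
      posSemidef_fromBlocks_inv_smul (hΨ (posSemidef_eigenProj hA.1 i)) (hA.eigenvalues_pos i)
  have := hΨA.isUnit.invertible
  simpa only [one_mul, conjTranspose_one, mul_one] using (hΨA.fromBlocks₂₂ _ 1).mp hblocks

lemma IsPositiveMap.posSemidef_mlog_map_sub_map_mlog {e : ℕ}
    {Ψ : Matrix (Fin e) (Fin e) ℂ →ₗ[ℂ] Matrix (Fin d) (Fin d) ℂ} (hΨ : IsPositiveMap Ψ)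
    (h1 : Ψ 1 = 1) {A : Matrix (Fin e) (Fin e) ℂ} (hA : A.PosDef) :
    (mlog (Ψ A) - Ψ (mlog A)).PosSemidef := by
  have hΨA : (Ψ A).PosDef := hΨ.posDef_map (h1 ▸ .one) hA
  have hherm : (mlog (Ψ A) - Ψ (mlog A)).IsHermitian := by
    refine (isHermitian_mlog _).sub ?_
    rw [IsHermitian, ← hΨ.map_conjTranspose, (isHermitian_mlog A).eq]
  refine posSemidef_of_forall_re_trace_mul_nonneg hherm fun B hB => ?_
  have hmass : ∑ i, (eigenProj hΨA.1 i * B).trace.re =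
      ∑ k, (Ψ (eigenProj hA.1 k) * B).trace.re := by
    simp only [← Complex.re_sum, ← trace_sum, ← Finset.sum_mul, ← map_sum, sum_eigenProj, h1]
  have hresolvent (t : ℝ) (ht : 0 ≤ t) :
      ∑ i, (eigenProj hΨA.1 i * B).trace.re / (hΨA.1.eigenvalues i + t) ≤
        ∑ k, (Ψ (eigenProj hA.1 k) * B).trace.re / (hA.1.eigenvalues k + t) := by
    have hAt : (A + t • 1).PosDef := hA.add_posSemidef (PosSemidef.one.smul ht)
    have h := trace_mul_nonneg (hΨ.posSemidef_map_inv_sub_inv_map h1 hAt) hB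
    rw [map_add, LinearMap.map_smul_of_tower, h1,
      inv_add_smul_one hA.1 fun k => (add_pos_of_pos_of_nonneg (hA.eigenvalues_pos k) ht).ne',
      inv_add_smul_one hΨA.1 fun i => (add_pos_of_pos_of_nonneg (hΨA.eigenvalues_pos i) ht).ne']
      at h
    simpa only [map_sum, LinearMap.map_smul_of_tower, sub_mul, Finset.sum_mul, smul_mul_assoc,
      trace_sub, trace_sum, trace_smul, Complex.sub_re, Complex.re_sum, Complex.smul_re,
      smul_eq_mul, sub_nonneg, div_eq_inv_mul] using (Complex.nonneg_iff.mp h).1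
  rw [mlog_eq_sum hA.1, mlog_eq_sum hΨA.1]
  simpa only [map_sum, LinearMap.map_smul_of_tower, sub_mul, Finset.sum_mul, smul_mul_assoc,
    trace_sub, trace_sum, trace_smul, Complex.sub_re, Complex.re_sum, Complex.smul_re,
    smul_eq_mul, sub_nonneg, mul_comm (Real.log _)] using
    sum_mul_log_le_of_resolvent_le hΨA.eigenvalues_pos hA.eigenvalues_pos hmass hresolvent

end Jensen

section ModularResolvent

variable {m n : Type*} [Fintype m] [Fintype n] {ρ σ : Matrix n n ℂ} {t : ℝ}

/-- The operator `L_σ + t R_ρ : X ↦ σ X + t X ρ`, that is, `(Δ + t) R_ρ` for the relative modular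
operator `Δ = L_σ R_ρ⁻¹`. -/
def modularPencil (ρ σ : Matrix n n ℂ) (t : ℝ) : Matrix n n ℂ →ₗ[ℝ] Matrix n n ℂ :=
  LinearMap.mulLeft ℝ σ + t • LinearMap.mulRight ℝ ρ

/-- The concave quadratic functional of `X` whose maximum is the matrix element
`⟨ρ, (L_σ + t R_ρ)⁻¹ ρ⟩` of the relative modular resolvent. -/
def resolventForm (ρ σ : Matrix n n ℂ) (t : ℝ) (X : Matrix n n ℂ) : ℝ :=
  2 * (Xᴴ * ρ).trace.re - (Xᴴ * modularPencil ρ σ t X).trace.re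

lemma modularPencil_apply (ρ σ : Matrix n n ℂ) (t : ℝ) (X : Matrix n n ℂ) :
    modularPencil ρ σ t X = σ * X + t • (X * ρ) :=
  rfl

lemma re_trace_mul_modularPencil (ρ σ : Matrix n n ℂ) (t : ℝ) (X : Matrix n n ℂ) :
    (Xᴴ * modularPencil ρ σ t X).trace.re =
      (X * Xᴴ * σ).trace.re + t * (Xᴴ * X * ρ).trace.re := by
  rw [modularPencil_apply, mul_add, trace_add, Complex.add_re, ← mul_assoc, trace_mul_cycle,
    mul_smul_comm, trace_smul, Complex.smul_re, smul_eq_mul, ← mul_assoc]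

lemma re_trace_mul_modularPencil_nonneg (hρ : ρ.PosSemidef) (hσ : σ.PosSemidef) (ht : 0 ≤ t)
    (X : Matrix n n ℂ) : 0 ≤ (Xᴴ * modularPencil ρ σ t X).trace.re := by
  have hXσ := trace_mul_nonneg (posSemidef_self_mul_conjTranspose X) hσ
  have hXρ := trace_mul_nonneg (posSemidef_conjTranspose_mul_self X) hρ
  rw [re_trace_mul_modularPencil]
  exact add_nonneg (Complex.nonneg_iff.mp hXσ).1 (mul_nonneg ht (Complex.nonneg_iff.mp hXρ).1)

lemma re_trace_mul_modularPencil_comm (hρ : ρ.IsHermitian) (hσ : σ.IsHermitian)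
    (X Y : Matrix n n ℂ) :
    (Xᴴ * modularPencil ρ σ t Y).trace.re = (Yᴴ * modularPencil ρ σ t X).trace.re := by
  have hstar : (Xᴴ * modularPencil ρ σ t Y).trace = star (Yᴴ * modularPencil ρ σ t X).trace := by
    rw [← trace_conjTranspose, conjTranspose_mul, conjTranspose_conjTranspose, modularPencil_apply,
      modularPencil_apply, conjTranspose_add, conjTranspose_smul, conjTranspose_mul,
      conjTranspose_mul, hρ.eq, hσ.eq, star_trivial, mul_add, add_mul, trace_add, trace_add,
      mul_assoc, mul_smul_comm, smul_mul_assoc, trace_smul, trace_smul, mul_assoc,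
      trace_mul_comm ρ, mul_assoc]
  rw [hstar, ← starRingEnd_apply, Complex.conj_re]

lemma resolventForm_le_of_modularPencil_eq (hρ : ρ.PosSemidef) (hσ : σ.PosSemidef) (ht : 0 ≤ t)
    {X : Matrix n n ℂ} (hX : modularPencil ρ σ t X = ρ) (Y : Matrix n n ℂ) :
    resolventForm ρ σ t Y ≤ (Xᴴ * ρ).trace.re := by
  have h := re_trace_mul_modularPencil_nonneg hρ hσ ht (X - Y)
  rw [conjTranspose_sub, map_sub, sub_mul, mul_sub, mul_sub, trace_sub, trace_sub, trace_sub,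
    Complex.sub_re, Complex.sub_re, Complex.sub_re,
    re_trace_mul_modularPencil_comm hρ.1 hσ.1 X Y, hX] at h
  rw [resolventForm]
  linarith

lemma resolventForm_eq_of_modularPencil_eq {X : Matrix n n ℂ} (hX : modularPencil ρ σ t X = ρ) :
    resolventForm ρ σ t X = (Xᴴ * ρ).trace.re := by
  rw [resolventForm, hX, two_mul, add_sub_cancel_right]

lemma IsSchwarzMap.resolventForm_map_le {Φ : Matrix n n ℂ →ₗ[ℂ] Matrix m m ℂ}
    {Ψ : Matrix m m ℂ →ₗ[ℂ] Matrix n n ℂ} (hΨ : IsSchwarzMap Ψ)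
    (hadj : ∀ a b, (Ψ a * b).trace = (a * Φ b).trace) (hρ : ρ.PosSemidef) (hσ : σ.PosSemidef)
    (ht : 0 ≤ t) (Y : Matrix m m ℂ) :
    resolventForm (Φ ρ) (Φ σ) t Y ≤ resolventForm ρ σ t (Ψ Y) := by
  have hstar : Ψ Yᴴ = (Ψ Y)ᴴ := hΨ.isPositiveMap.map_conjTranspose Y
  have hleft := hΨ Yᴴ
  have hright := hΨ Y
  rw [hstar, conjTranspose_conjTranspose, conjTranspose_conjTranspose] at hleft
  have hσY := (Complex.nonneg_iff.mp (trace_mul_nonneg hleft hσ)).1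
  have hρY := (Complex.nonneg_iff.mp (trace_mul_nonneg hright hρ)).1
  rw [sub_mul, trace_sub, Complex.sub_re, sub_nonneg] at hσY hρY
  rw [resolventForm, resolventForm, re_trace_mul_modularPencil, re_trace_mul_modularPencil,
    ← hadj, ← hadj, ← hadj, hstar]
  gcongr

end ModularResolvent

section RelativeEntropy

variable {n : Type*} [Fintype n] [DecidableEq n] {ρ σ : Matrix n n ℂ}

/-- The eigenvalues `q j / p i` of the relative modular operator `L_σ R_ρ⁻¹`, where `p` and `q`
are the eigenvalues of `ρ` and `σ`. -/
def modularEigenvalue (hρ : ρ.IsHermitian) (hσ : σ.IsHermitian) (x : n × n) : ℝ :=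
  hσ.eigenvalues x.2 / hρ.eigenvalues x.1

/-- The spectral weights `p i * |⟨u i, v j⟩|²` of the relative modular operator in the vector
`ρ ^ (1 / 2)`, where `u` and `v` are the eigenbases of `ρ` and `σ`. -/
def modularWeight (hρ : ρ.IsHermitian) (hσ : σ.IsHermitian) (x : n × n) : ℝ :=
  hρ.eigenvalues x.1 * (eigenProj hρ x.1 * eigenProj hσ x.2).trace.re

lemma modularEigenvalue_pos (hρ : ρ.PosDef) (hσ : σ.PosDef) (x : n × n) :
    0 < modularEigenvalue hρ.1 hσ.1 x :=
  div_pos (hσ.eigenvalues_pos x.2) (hρ.eigenvalues_pos x.1)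

lemma re_trace_sum_smul_eigenProj_mul (hρ : ρ.IsHermitian) (hσ : σ.IsHermitian) (f g : n → ℝ) :
    ((∑ i, (hρ.eigenvalues i * f i) • eigenProj hρ i) * ∑ j, g j • eigenProj hσ j).trace.re =
      ∑ x, modularWeight hρ hσ x * (f x.1 * g x.2) := by
  simp only [Finset.sum_mul_sum, trace_sum, Complex.re_sum, smul_mul_smul_comm, trace_smul,
    Complex.smul_re, smul_eq_mul, modularWeight, Fintype.sum_prod_type]
  exact Finset.sum_congr rfl fun i _ => Finset.sum_congr rfl fun j _ => by ring

lemma sum_modularWeight (hρ : ρ.IsHermitian) (hσ : σ.IsHermitian) :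
    ∑ x, modularWeight hρ hσ x = ρ.trace.re := by
  simpa [sum_eigenvalues_smul_eigenProj, sum_eigenProj] using
    (re_trace_sum_smul_eigenProj_mul hρ hσ 1 1).symm

lemma exists_modularPencil_eq (hρ : ρ.PosDef) (hσ : σ.PosDef) {t : ℝ} (ht : 0 ≤ t) :
    ∃ X, modularPencil ρ σ t X = ρ ∧ (Xᴴ * ρ).trace.re =
      ∑ x, modularWeight hρ.1 hσ.1 x / (modularEigenvalue hρ.1 hσ.1 x + t) := by
  have hΔ (x : n × n) : modularEigenvalue hρ.1 hσ.1 x + t ≠ 0 :=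
    (add_pos_of_pos_of_nonneg (modularEigenvalue_pos hρ hσ x) ht).ne'
  refine ⟨∑ x : n × n, (modularEigenvalue hρ.1 hσ.1 x + t)⁻¹ •
    (eigenProj hσ.1 x.2 * eigenProj hρ.1 x.1), ?_, ?_⟩
  · have hterm (x : n × n) : modularPencil ρ σ t (eigenProj hσ.1 x.2 * eigenProj hρ.1 x.1) =
        (modularEigenvalue hρ.1 hσ.1 x + t) •
          (eigenProj hσ.1 x.2 * (hρ.1.eigenvalues x.1 • eigenProj hρ.1 x.1)) := by
      have hp : hρ.1.eigenvalues x.1 ≠ 0 := (hρ.eigenvalues_pos x.1).ne'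
      rw [modularPencil_apply, ← mul_assoc, mul_eigenProj, mul_assoc, eigenProj_mul, mul_smul_comm,
        smul_mul_assoc, smul_smul, smul_smul, ← add_smul, add_mul, modularEigenvalue,
        div_mul_cancel₀ _ hp]
    calc _ = ∑ x : n × n, eigenProj hσ.1 x.2 * (hρ.1.eigenvalues x.1 • eigenProj hρ.1 x.1) := by
          simp only [map_sum, map_smul, hterm, smul_smul, inv_mul_cancel₀ (hΔ _), one_smul]
      _ = ρ := by
          simp only [Fintype.sum_prod_type_right, ← Finset.sum_mul_sum, sum_eigenProj, one_mul,
            sum_eigenvalues_smul_eigenProj]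
  · have hterm (x : n × n) : ((eigenProj hσ.1 x.2 * eigenProj hρ.1 x.1)ᴴ * ρ).trace.re =
        modularWeight hρ.1 hσ.1 x := by
      rw [conjTranspose_mul, (posSemidef_eigenProj hρ.1 _).1.eq, (posSemidef_eigenProj hσ.1 _).1.eq,
        trace_mul_comm, ← mul_assoc, mul_eigenProj, smul_mul_assoc, trace_smul, Complex.smul_re,
        smul_eq_mul, modularWeight]
    simp only [conjTranspose_sum, conjTranspose_smul, star_trivial, Finset.sum_mul,
      smul_mul_assoc, trace_sum, trace_smul, Complex.re_sum, Complex.smul_re, hterm, smul_eq_mul,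
      inv_mul_eq_div]

lemma re_trace_mul_mlog_self {ρ σ : Matrix (Fin d) (Fin d) ℂ} (hρ : ρ.IsHermitian)
    (hσ : σ.IsHermitian) : (ρ * mlog ρ).trace.re =
      ∑ x, modularWeight hρ hσ x * Real.log (hρ.eigenvalues x.1) := by
  have hmul : ρ * mlog ρ =
      ∑ i, (hρ.eigenvalues i * Real.log (hρ.eigenvalues i)) • eigenProj hρ i := by
    simp only [mlog_eq_sum hρ, Finset.mul_sum, mul_smul_comm, mul_eigenProj, smul_smul, mul_comm]
  rw [hmul]
  simpa [sum_eigenProj] using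
    re_trace_sum_smul_eigenProj_mul hρ hσ (fun i => Real.log (hρ.eigenvalues i)) 1

lemma re_trace_mul_mlog {ρ σ : Matrix (Fin d) (Fin d) ℂ} (hρ : ρ.IsHermitian)
    (hσ : σ.IsHermitian) : (ρ * mlog σ).trace.re =
      ∑ x, modularWeight hρ hσ x * Real.log (hσ.eigenvalues x.2) := by
  simpa [sum_eigenvalues_smul_eigenProj, ← mlog_eq_sum] using
    re_trace_sum_smul_eigenProj_mul hρ hσ 1 fun j => Real.log (hσ.eigenvalues j)

lemma relEnt_eq_neg_sum {ρ σ : Matrix (Fin d) (Fin d) ℂ} (hρ : ρ.PosDef) (hσ : σ.PosDef) :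
    relEnt ρ σ = -∑ x, modularWeight hρ.1 hσ.1 x * Real.log (modularEigenvalue hρ.1 hσ.1 x) := by
  rw [relEnt, trace_sub, Complex.sub_re, re_trace_mul_mlog_self hρ.1 hσ.1,
    re_trace_mul_mlog hρ.1 hσ.1, ← Finset.sum_sub_distrib, ← Finset.sum_neg_distrib]
  refine Finset.sum_congr rfl fun x _ => ?_
  rw [modularEigenvalue,
    Real.log_div (hσ.eigenvalues_pos x.2).ne' (hρ.eigenvalues_pos x.1).ne']
  ring

end RelativeEntropy

section DataProcessing

variable {e : ℕ} {Φ : Matrix (Fin d) (Fin d) ℂ →ₗ[ℂ] Matrix (Fin e) (Fin e) ℂ}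
  {Ψ : Matrix (Fin e) (Fin e) ℂ →ₗ[ℂ] Matrix (Fin d) (Fin d) ℂ} {ρ σ : Matrix (Fin d) (Fin d) ℂ}

lemma IsSchwarzMap.relEnt_map_le (hΨ : IsSchwarzMap Ψ) (htp : ∀ x, (Φ x).trace = x.trace)
    (hadj : ∀ a b, (Ψ a * b).trace = (a * Φ b).trace)
    (hρ : ρ.PosDef) (hσ : σ.PosDef) (hΦρ : (Φ ρ).PosDef) (hΦσ : (Φ σ).PosDef) :
    relEnt (Φ ρ) (Φ σ) ≤ relEnt ρ σ := by
  rw [relEnt_eq_neg_sum hρ hσ, relEnt_eq_neg_sum hΦρ hΦσ, neg_le_neg_iff]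
  have hmass : ∑ x, modularWeight hΦρ.1 hΦσ.1 x = ∑ x, modularWeight hρ.1 hσ.1 x := by
    rw [sum_modularWeight, sum_modularWeight, htp]
  refine sum_mul_log_le_of_resolvent_le (modularEigenvalue_pos hΦρ hΦσ)
    (modularEigenvalue_pos hρ hσ) hmass fun t ht => ?_
  obtain ⟨X, hX, hXρ⟩ := exists_modularPencil_eq hρ hσ ht
  obtain ⟨Y, hY, hYρ⟩ := exists_modularPencil_eq hΦρ hΦσ ht
  rw [← hXρ, ← hYρ]
  calc (Yᴴ * Φ ρ).trace.re = resolventForm (Φ ρ) (Φ σ) t Y :=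
        (resolventForm_eq_of_modularPencil_eq hY).symm
    _ ≤ resolventForm ρ σ t (Ψ Y) :=
        hΨ.resolventForm_map_le hadj hρ.posSemidef hσ.posSemidef ht Y
    _ ≤ (Xᴴ * ρ).trace.re :=
        resolventForm_le_of_modularPencil_eq hρ.posSemidef hσ.posSemidef ht hX _

theorem entropy_difference_lemma_general (hΨ : IsSchwarzMap Ψ)
    (htp : ∀ x, (Φ x).trace = x.trace) (hΦ1 : (Φ 1).PosDef)
    (hadj : ∀ a b, (Ψ a * b).trace = (a * Φ b).trace) (hρ : ρ.PosDef) (hσ : σ.PosDef) :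
    relEnt ρ (Ψ (Φ σ)) ≤ vnEnt ρ - vnEnt (Φ ρ) + relEnt ρ σ := by
  have hadj' (a b) : (Φ a * b).trace = (a * Ψ b).trace := by
    rw [trace_mul_comm, ← hadj, trace_mul_comm]
  have hΦ : IsPositiveMap Φ := fun _ =>
    posSemidef_map_of_trace_adjoint hadj' fun _ hB => hΨ.isPositiveMap hB
  have hΦσ : (Φ σ).PosDef := hΦ.posDef_map hΦ1 hσ
  have hjensen := trace_mul_nonneg (hΨ.isPositiveMap.posSemidef_mlog_map_sub_map_mlog
    (map_one_of_trace_adjoint hadj htp) hΦσ) hρ.posSemidef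
  have hdata := hΨ.relEnt_map_le htp hadj hρ hσ (hΦ.posDef_map hΦ1 hρ) hΦσ
  have hjensen' : (Φ ρ * mlog (Φ σ)).trace.re ≤ (ρ * mlog (Ψ (Φ σ))).trace.re := by
    rw [← sub_nonneg, ← Complex.sub_re, hadj', ← trace_sub, ← mul_sub, trace_mul_comm]
    exact (Complex.nonneg_iff.mp hjensen).1
  simp only [relEnt, vnEnt, trace_sub, Complex.sub_re] at hdata ⊢
  linarith

end DataProcessing

/-- the entropy difference lemma
`D(ρ ‖ Φ*Φ(ω)) ≤ (H(ρ) − H(Φ(ρ))) + D(ρ ‖ ω)` for a unital quantum channel `Φ` with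
trace adjoint `Φ*`. -/
theorem entropy_difference_lemma
    (Φ Φad : Matrix (Fin d) (Fin d) ℂ →ₗ[ℂ] Matrix (Fin d) (Fin d) ℂ)
    (hCP : IsCompletelyPositive Φ) (hunital : Φ 1 = 1)
    (htp : ∀ x, (Φ x).trace = x.trace)
    (hadj : ∀ a b : Matrix (Fin d) (Fin d) ℂ, (Φad a * b).trace = (a * Φ b).trace)
    (ρ ω : Matrix (Fin d) (Fin d) ℂ)
    (hρ : ρ.PosDef) (hω : ω.PosDef) (hρ1 : ρ.trace = 1) (hω1 : ω.trace = 1) :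
    relEnt ρ (Φad (Φ ω)) ≤ (vnEnt ρ - vnEnt (Φ ρ)) + relEnt ρ ω :=
  entropy_difference_lemma_general
    ((hCP.traceAdjoint hadj).isSchwarzMap (map_one_of_trace_adjoint hadj htp)) htp
    (by rw [hunital]; exact .one) hadj hρ hω
end
end

section
/- Let ρ, σ be positive definite d×d density matrices and set ρ_t = t·ρ + (1−t)·σ for t ∈ [0,1]. Then the quantum relative entropy satisfies the integral representation D(ρ‖σ) = ∫₀¹ (1−t)·γ_{ρ_t}(ρ−σ) dt, where γ is the BKM metric γ_ω(X) = ∫₀^∞ tr(X*(ω+s)^{-1} X (ω+s)^{-1}) ds. -/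
open Matrix MeasureTheory
open scoped ComplexOrder

noncomputable section

variable {d : ℕ}

/-- The Bogoliubov–Kubo–Mori metric
`γ_ω(X) = ∫₀^∞ tr(X*(ω+s)⁻¹ X (ω+s)⁻¹) ds`. -/
def bkm (ω X : Matrix (Fin d) (Fin d) ℂ) : ℝ :=
  ∫ s in Set.Ioi (0 : ℝ),
    ((Xᴴ * (ω + (s : ℂ) • (1 : Matrix (Fin d) (Fin d) ℂ))⁻¹ * X *
      (ω + (s : ℂ) • (1 : Matrix (Fin d) (Fin d) ℂ))⁻¹).trace).re

/-!
For positive definite `P` and `Q`, Taylor's formula for `-log det` along the segment from `Q` to `P`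
writes Stein's loss `tr (P Q⁻¹) - log det (P Q⁻¹) - n` as
`∫₀¹ (1 - t) tr (X (Q + t X)⁻¹ X (Q + t X)⁻¹) dt` with `X = P - Q`. The shifted relative entropy
`s ↦ D(ρ + s‖σ + s)` has derivative minus Stein's loss of `(ρ + s, σ + s)` and tends to `tr (ρ - σ)`
as `s → ∞`. Hence `D(ρ‖σ) - tr (ρ - σ)` is the integral over `s` of Stein's loss; since everything
is nonnegative the two integrals can be exchanged, and the inner integral over `s` becomes the BKM
metric.
-/

open Filter Topology Set

section MatrixCalculus

variable {𝕜 R n : Type*} [NontriviallyNormedField 𝕜] [Fintype n] [DecidableEq n]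

lemma sum_det_updateRow_eq_trace_mul_adjugate [CommRing R] (A X : Matrix n n R) :
    ∑ i, (A.updateRow i (X i)).det = (X * A.adjugate).trace := by
  simp only [trace, diag_apply, mul_apply, ← cramer_transpose_apply, cramer_eq_adjugate_mulVec,
    ← adjugate_transpose, mulVec, dotProduct, transpose_apply, mul_comm]

variable [NormedCommRing R] [NormedAlgebra 𝕜 R] {M : 𝕜 → Matrix n n R} {M' : Matrix n n R} {t : 𝕜}

lemma hasDerivAt_matrix_det (hM : HasDerivAt M M' t) :
    HasDerivAt (fun u => (M u).det) (M' * (M t).adjugate).trace t := by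
  let detRows : ContinuousMultilinearMap R (fun _ : n => n → R) R :=
    { toMultilinearMap := (detRowAlternating : (n → R) [⋀^n]→ₗ[R] R).toMultilinearMap
      cont := continuous_id.matrix_det }
  have hdet := (detRows.restrictScalars 𝕜).hasFDerivAt (M t)
  rw [← sum_det_updateRow_eq_trace_mul_adjugate]
  exact (hdet.comp_hasDerivAt (F := n → n → R) t hM).congr_deriv
    ((detRows.restrictScalars 𝕜).linearDeriv_apply (M t) M')

open scoped Matrix.Norms.Operator in
lemma hasDerivAt_matrix_inv [CompleteSpace R] (hM : HasDerivAt M M' t) (h : IsUnit (M t)) :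
    HasDerivAt (fun u => (M u)⁻¹) (-((M t)⁻¹ * M' * (M t)⁻¹)) t := by
  have : HasSummableGeomSeries (Matrix n n R) :=
    @instHasSummableGeomSeriesOfCompleteSpace _ _ (instCompleteSpace n n R)
  obtain ⟨U, hU⟩ := h
  have hinv := hasFDerivAt_ringInverse (𝕜 := 𝕜) U
  rw [hU] at hinv
  simp only [nonsing_inv_eq_ringInverse]
  refine (hinv.comp_hasDerivAt t hM).congr_deriv ?_
  simp [← hU]

end MatrixCalculus

lemma posDef_add_smul_sub {n 𝕜 : Type*} [RCLike 𝕜] {P Q : Matrix n n 𝕜} (hP : P.PosDef)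
    (hQ : Q.PosDef) {t : ℝ} (ht : t ∈ Icc (0 : ℝ) 1) : (Q + t • (P - Q)).PosDef := by
  have hconv : Convex ℝ {A : Matrix n n 𝕜 | A.PosDef} :=
    convex_iff_forall_pos.2 fun _ hA _ hB _ _ ha hb _ => (hA.smul ha).add (hB.smul hb)
  exact hconv.add_smul_sub_mem hQ hP ht

section LogDet

variable {n : Type*} [Fintype n] [DecidableEq n] {A P Q : Matrix n n ℂ}

/-- Stein's loss `tr (P Q⁻¹) - log det (P Q⁻¹) - n`, which for positive definite `P` and `Q` is the
Bregman divergence of `-log det` from `Q` to `P`. -/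
def logDetDiv (P Q : Matrix n n ℂ) : ℝ :=
  (P * Q⁻¹).trace.re - (Real.log P.det.re - Real.log Q.det.re) - Fintype.card n

/-- The second derivative of `-log det` at a positive definite `A` in a Hermitian direction `X`.
Along `A = ω + s` it is the integrand of the BKM metric `γ_ω(X)`. -/
def logDetHess (A X : Matrix n n ℂ) : ℝ := (Xᴴ * A⁻¹ * X * A⁻¹).trace.re

open scoped MatrixOrder Matrix.Norms.L2Operator in
lemma logDetHess_nonneg (hA : A.PosDef) (X : Matrix n n ℂ) : 0 ≤ logDetHess A X := by
  obtain ⟨B, hB⟩ : ∃ B, A⁻¹ = Bᴴ * B :=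
    CStarAlgebra.nonneg_iff_eq_star_mul_self.1 hA.inv.posSemidef.nonneg
  have hcyc : (Xᴴ * A⁻¹ * X * A⁻¹).trace = ((B * X * Bᴴ)ᴴ * (B * X * Bᴴ)).trace := by
    simp only [hB, conjTranspose_mul, conjTranspose_conjTranspose]
    rw [← mul_assoc, trace_mul_comm]
    simp only [mul_assoc]
  rw [logDetHess, hcyc]
  exact (Complex.nonneg_iff.1 (posSemidef_conjTranspose_mul_self _).trace_nonneg).1

lemma continuousAt_logDetHess (hA : IsUnit A) (X : Matrix n n ℂ) :
    ContinuousAt (fun B => logDetHess B X) A := by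
  have hinv : ContinuousAt (fun B : Matrix n n ℂ => B⁻¹) A := by
    refine continuousAt_matrix_inv A ?_
    rw [Ring.inverse_eq_inv']
    exact continuousAt_inv₀ ((isUnit_iff_isUnit_det A).1 hA).ne_zero
  have hpoly : Continuous fun B : Matrix n n ℂ => (Xᴴ * B * X * B).trace.re := by fun_prop
  exact hpoly.continuousAt.comp hinv

variable {M : ℝ → Matrix n n ℂ} {M' : Matrix n n ℂ} {t : ℝ}

lemma hasDerivAt_log_re_det (hM : HasDerivAt M M' t) (h : (M t).PosDef) :
    HasDerivAt (fun u => Real.log (M u).det.re) (M' * (M t)⁻¹).trace.re t := by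
  obtain ⟨hre, him⟩ := Complex.pos_iff.1 h.det_pos
  have hadj : (M t).adjugate = (M t).det • (M t)⁻¹ := by
    rw [inv_def, smul_smul, Ring.mul_inverse_cancel _ h.det_pos.ne'.isUnit, one_smul]
  have hdet := Complex.reCLM.hasFDerivAt.comp_hasDerivAt t (hasDerivAt_matrix_det hM)
  refine (hdet.log hre.ne').congr_deriv ?_
  rw [Complex.reCLM_apply, hadj, mul_smul_comm, trace_smul, smul_eq_mul, Complex.mul_re, ← him,
    zero_mul, sub_zero]
  exact mul_div_cancel_left₀ _ hre.ne'

open scoped Matrix.Norms.Operator in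
lemma hasDerivAt_re_trace_mul_inv (X : Matrix n n ℂ) (hM : HasDerivAt M M' t) (h : IsUnit (M t)) :
    HasDerivAt (fun u => (X * (M u)⁻¹).trace.re) (-(X * (M t)⁻¹ * M' * (M t)⁻¹).trace.re) t := by
  let L : Matrix n n ℂ →ₗ[ℝ] ℝ := Complex.reLm ∘ₗ traceLinearMap n ℝ ℂ ∘ₗ LinearMap.mulLeft ℝ X
  have hL : HasDerivAt (fun u => L (M u)⁻¹) (L (-((M t)⁻¹ * M' * (M t)⁻¹))) t :=
    L.toContinuousLinearMap.hasFDerivAt.comp_hasDerivAt t (hasDerivAt_matrix_inv hM h)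
  refine hL.congr_deriv ?_
  simp [L, mul_assoc]

open scoped Matrix.Norms.Operator in
lemma logDetDiv_eq_integral (hP : P.PosDef) (hQ : Q.PosDef) :
    logDetDiv P Q = ∫ t in (0 : ℝ)..1, (1 - t) * logDetHess (Q + t • (P - Q)) (P - Q) := by
  set X := P - Q with hX
  have hXH : Xᴴ = X := (hP.isHermitian.sub hQ.isHermitian).eq
  have hpos : ∀ t ∈ Icc (0 : ℝ) 1, (Q + t • X).PosDef := fun _ => posDef_add_smul_sub hP hQ
  have hline : ∀ t : ℝ, HasDerivAt (fun u : ℝ => Q + u • X) X t := fun t =>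
    (((hasDerivAt_id t).smul_const X).const_add Q).congr_deriv (one_smul ℝ X)
  have hderiv : ∀ t ∈ uIcc (0 : ℝ) 1, HasDerivAt
      (fun u : ℝ => -((1 - u) * (X * (Q + u • X)⁻¹).trace.re) - Real.log (Q + u • X).det.re)
      ((1 - t) * logDetHess (Q + t • X) X) t := by
    intro t ht
    rw [uIcc_of_le zero_le_one] at ht
    refine ((((hasDerivAt_id t).const_sub 1).mul
      (hasDerivAt_re_trace_mul_inv X (hline t) (hpos t ht).isUnit)).neg.sub
      (hasDerivAt_log_re_det (hline t) (hpos t ht))).congr_deriv ?_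
    simp only [logDetHess, hXH, id]
    ring
  have hcont : ContinuousOn (fun t : ℝ => (1 - t) * logDetHess (Q + t • X) X) (uIcc 0 1) := by
    intro t ht
    rw [uIcc_of_le zero_le_one] at ht
    have hhess := (continuousAt_logDetHess (hpos t ht).isUnit X).comp (f := fun u : ℝ => Q + u • X)
      (by fun_prop)
    exact ((continuousAt_const.sub continuousAt_id).mul hhess).continuousWithinAt
  have htrace : (X * Q⁻¹).trace.re = (P * Q⁻¹).trace.re - Fintype.card n := by
    rw [hX, sub_mul, mul_nonsing_inv _ ((isUnit_iff_isUnit_det Q).1 hQ.isUnit), trace_sub,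
      trace_one, Complex.sub_re, Complex.natCast_re]
  rw [intervalIntegral.integral_eq_sub_of_hasDerivAt hderiv hcont.intervalIntegrable]
  simp only [hX, one_smul, zero_smul, add_zero, add_sub_cancel, logDetDiv] at htrace ⊢
  linarith

lemma logDetDiv_nonneg (hP : P.PosDef) (hQ : Q.PosDef) : 0 ≤ logDetDiv P Q := by
  rw [logDetDiv_eq_integral hP hQ]
  refine intervalIntegral.integral_nonneg zero_le_one fun t ht => ?_
  exact mul_nonneg (sub_nonneg.2 ht.2)
    (logDetHess_nonneg (posDef_add_smul_sub hP hQ ht) _)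

end LogDet

section SpectralTrace

variable {n : Type*} [Fintype n] [DecidableEq n] {A : Matrix n n ℂ}

/-- The `i`-th diagonal entry of `M` in the eigenbasis of `A`, i.e. `⟨eᵢ, M eᵢ⟩` for the
`i`-th eigenvector `eᵢ` of `A`. -/
def eigenDiag (hA : A.IsHermitian) (M : Matrix n n ℂ) (i : n) : ℝ :=
  ((star (hA.eigenvectorUnitary : Matrix n n ℂ) * M * hA.eigenvectorUnitary) i i).re

lemma eigenDiag_add_smul_one (hA : A.IsHermitian) (M : Matrix n n ℂ) (s : ℝ) (i : n) :
    eigenDiag hA (M + s • 1) i = eigenDiag hA M i + s := by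
  simp [eigenDiag, mul_add, add_mul]

lemma eigenDiag_one (hA : A.IsHermitian) (i : n) : eigenDiag hA 1 i = 1 := by
  simp [eigenDiag]

lemma eigenDiag_self (hA : A.IsHermitian) (i : n) : eigenDiag hA A i = hA.eigenvalues i := by
  have h := hA.conjStarAlgAut_star_eigenvectorUnitary
  rw [Unitary.conjStarAlgAut_star_apply] at h
  simp [eigenDiag, h]

lemma eigenDiag_eq_zero (hA : A.IsHermitian) {M : Matrix n n ℂ}
    (hker : ∀ v, A *ᵥ v = 0 → M *ᵥ v = 0) {i : n} (hi : hA.eigenvalues i = 0) :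
    eigenDiag hA M i = 0 := by
  have hM : M *ᵥ hA.eigenvectorBasis i = 0 :=
    hker _ (by rw [hA.mulVec_eigenvectorBasis, hi, zero_smul])
  have hcol : ∀ j, (M * hA.eigenvectorUnitary : Matrix n n ℂ) j i = 0 := congrFun hM
  simp [eigenDiag, mul_assoc, mul_apply (M := star _), hcol]

lemma re_trace_mul_cfc (hA : A.IsHermitian) (M : Matrix n n ℂ) (f : ℝ → ℝ) :
    (M * cfc f A).trace.re = ∑ i, eigenDiag hA M i * f (hA.eigenvalues i) := by
  rw [hA.cfc_eq, IsHermitian.cfc, Unitary.conjStarAlgAut_apply, ← mul_assoc, trace_mul_comm,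
    ← mul_assoc, ← mul_assoc, trace, Complex.re_sum]
  simp [eigenDiag, mul_diagonal]

lemma re_trace_cfc (hA : A.IsHermitian) (f : ℝ → ℝ) :
    (cfc f A).trace.re = ∑ i, f (hA.eigenvalues i) := by
  simpa only [eigenDiag_one, one_mul] using re_trace_mul_cfc hA 1 f

lemma sum_eigenDiag (hA : A.IsHermitian) (M : Matrix n n ℂ) :
    ∑ i, eigenDiag hA M i = M.trace.re := by
  have hA' : IsSelfAdjoint A := hA
  simpa [cfc_const_one ℝ A] using (re_trace_mul_cfc hA M fun _ => 1).symm

lemma cfc_add_smul_one (hA : A.IsHermitian) (f : ℝ → ℝ) (s : ℝ) :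
    cfc f (A + s • 1) = cfc (fun x => f (x + s)) A := by
  have hA' : IsSelfAdjoint A := hA
  rw [← Algebra.algebraMap_eq_smul_one]
  nth_rw 1 [← cfc_id' ℝ A]
  rw [← cfc_add_const s _ A,
    ← cfc_comp' f (· + s) A ((finite_real_spectrum.image _).continuousOn f)]

lemma inv_eq_cfc (hA : A.PosDef) : A⁻¹ = cfc (·⁻¹ : ℝ → ℝ) A := by
  have hA' : IsSelfAdjoint A := hA.isHermitian
  obtain ⟨u, rfl⟩ := hA.isUnit
  rw [cfc_inv_id u, coe_units_inv]

lemma log_re_det_eq_re_trace_cfc_log (hA : A.PosDef) :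
    Real.log A.det.re = (cfc Real.log A).trace.re := by
  rw [re_trace_cfc hA.isHermitian, hA.isHermitian.det_eq_prod_eigenvalues, ← RCLike.ofReal_prod]
  exact Real.log_prod fun i _ => (hA.eigenvalues_pos i).ne'

lemma mlog_eq_cfc_log {A : Matrix (Fin d) (Fin d) ℂ} (hA : A.IsHermitian) :
    mlog A = cfc Real.log A := by
  rw [mlog, dif_pos hA, hA.cfc_eq, IsHermitian.cfc, Unitary.conjStarAlgAut_apply]
  rfl

end SpectralTrace

section ShiftedMulLog

variable {a b : ℝ}

lemma hasDerivAt_add_mul_log_add (a : ℝ) {s : ℝ} (h : b + s ≠ 0) :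
    HasDerivAt (fun u => (a + u) * Real.log (b + u)) (Real.log (b + s) + (a + s) / (b + s)) s := by
  refine (((hasDerivAt_id s).const_add a).mul
    (((hasDerivAt_id s).const_add b).log h)).congr_deriv ?_
  simp [div_eq_mul_inv]

lemma continuousAt_add_mul_log_add (h : b = 0 → a = 0) :
    ContinuousAt (fun s => (a + s) * Real.log (b + s)) 0 := by
  rcases eq_or_ne b 0 with hb | hb
  · simpa [hb, h hb] using Real.continuous_mul_log.continuousAt
  · exact (hasDerivAt_add_mul_log_add a (by simpa using hb)).continuousAt

lemma tendsto_add_mul_log_add_sub_log (a b : ℝ) :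
    Tendsto (fun s => (a + s) * (Real.log (b + s) - Real.log s)) atTop (𝓝 b) := by
  have hlog : Tendsto (fun s => Real.log (b + s) - Real.log s) atTop (𝓝 0) := by
    simpa only [add_comm b] using Real.tendsto_log_comp_add_sub_log b
  have hmul : Tendsto (fun s => s * (Real.log (b + s) - Real.log s)) atTop (𝓝 b) := by
    refine (Real.tendsto_mul_log_one_add_div_atTop b).congr' ?_
    filter_upwards [eventually_gt_atTop 0, eventually_gt_atTop (-b)] with s hs hbs
    rw [← Real.log_div (by linarith) hs.ne', add_div, div_self hs.ne', add_comm]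
  simpa only [mul_zero, zero_add, add_mul] using (hlog.const_mul a).add hmul

end ShiftedMulLog

section ShiftedRelEnt

lemma posDef_add_smul_one {n 𝕜 : Type*} [DecidableEq n] [RCLike 𝕜] {A : Matrix n n 𝕜}
    (hA : A.PosSemidef) {s : ℝ} (hs : 0 < s) : (A + s • 1).PosDef := by
  rw [add_comm]
  exact (PosDef.one.smul hs).add_posSemidef hA

lemma isHermitian_add_smul_one {n 𝕜 : Type*} [DecidableEq n] [RCLike 𝕜] {A : Matrix n n 𝕜}
    (hA : A.IsHermitian) (s : ℝ) : (A + s • 1).IsHermitian :=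
  hA.add (isHermitian_one.smul (IsSelfAdjoint.all s))

lemma logDetDiv_add_smul_one {n : Type*} [Fintype n] [DecidableEq n] {ρ σ : Matrix n n ℂ}
    (hρ : ρ.PosSemidef) (hσ : σ.PosSemidef) {s : ℝ} (hs : 0 < s) :
    logDetDiv (ρ + s • 1) (σ + s • 1) =
      ∑ i, (Real.log (hσ.isHermitian.eigenvalues i + s) +
        (eigenDiag hσ.isHermitian ρ i + s) / (hσ.isHermitian.eigenvalues i + s)) -
      ∑ i, (Real.log (hρ.isHermitian.eigenvalues i + s) + 1) := by
  rw [logDetDiv, log_re_det_eq_re_trace_cfc_log (posDef_add_smul_one hρ hs),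
    log_re_det_eq_re_trace_cfc_log (posDef_add_smul_one hσ hs),
    inv_eq_cfc (posDef_add_smul_one hσ hs), cfc_add_smul_one hσ.isHermitian,
    cfc_add_smul_one hσ.isHermitian, cfc_add_smul_one hρ.isHermitian,
    re_trace_mul_cfc hσ.isHermitian, re_trace_cfc hσ.isHermitian, re_trace_cfc hρ.isHermitian]
  simp only [eigenDiag_add_smul_one, ← div_eq_mul_inv, Finset.sum_add_distrib, Finset.sum_const,
    Finset.card_univ, nsmul_one]
  ring

variable {ρ σ : Matrix (Fin d) (Fin d) ℂ}

lemma relEnt_add_smul_one (hρ : ρ.IsHermitian) (hσ : σ.IsHermitian) (s : ℝ) :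
    relEnt (ρ + s • 1) (σ + s • 1) =
      ∑ i, (hρ.eigenvalues i + s) * Real.log (hρ.eigenvalues i + s) -
        ∑ i, (eigenDiag hσ ρ i + s) * Real.log (hσ.eigenvalues i + s) := by
  simp only [relEnt, mlog_eq_cfc_log, isHermitian_add_smul_one, hρ, hσ, trace_sub, Complex.sub_re,
    cfc_add_smul_one, re_trace_mul_cfc, eigenDiag_add_smul_one, eigenDiag_self]

lemma hasDerivAt_relEnt_add_smul_one (hρ : ρ.PosSemidef) (hσ : σ.PosSemidef) {s : ℝ}
    (hs : 0 < s) :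
    HasDerivAt (fun u : ℝ => relEnt (ρ + u • 1) (σ + u • 1))
      (-logDetDiv (ρ + s • 1) (σ + s • 1)) s := by
  have hv : ∀ i, hρ.isHermitian.eigenvalues i + s ≠ 0 := fun i =>
    (add_pos_of_nonneg_of_pos (hρ.eigenvalues_nonneg i) hs).ne'
  have hb : ∀ i, hσ.isHermitian.eigenvalues i + s ≠ 0 := fun i =>
    (add_pos_of_nonneg_of_pos (hσ.eigenvalues_nonneg i) hs).ne'
  simp only [relEnt_add_smul_one hρ.isHermitian hσ.isHermitian, logDetDiv_add_smul_one hρ hσ hs]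
  refine ((HasDerivAt.fun_sum fun i _ => hasDerivAt_add_mul_log_add _ (hv i)).sub
    (HasDerivAt.fun_sum fun i _ => hasDerivAt_add_mul_log_add _ (hb i))).congr_deriv ?_
  simp only [div_self (hv _), neg_sub]

lemma continuousAt_relEnt_add_smul_one (hρ : ρ.IsHermitian) (hσ : σ.IsHermitian)
    (hker : ∀ v, σ *ᵥ v = 0 → ρ *ᵥ v = 0) :
    ContinuousAt (fun s : ℝ => relEnt (ρ + s • 1) (σ + s • 1)) 0 := by
  simp only [relEnt_add_smul_one hρ hσ]
  exact (tendsto_finsetSum _ fun i _ => continuousAt_add_mul_log_add id).sub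
    (tendsto_finsetSum _ fun i _ => continuousAt_add_mul_log_add (eigenDiag_eq_zero hσ hker))

lemma tendsto_relEnt_add_smul_one_atTop (hρ : ρ.IsHermitian) (hσ : σ.IsHermitian) :
    Tendsto (fun s : ℝ => relEnt (ρ + s • 1) (σ + s • 1)) atTop (𝓝 (ρ - σ).trace.re) := by
  have htrace {A : Matrix (Fin d) (Fin d) ℂ} (hA : A.IsHermitian) :
      ∑ i, hA.eigenvalues i = A.trace.re := by
    simpa only [eigenDiag_self] using sum_eigenDiag hA A
  have hlim : Tendsto (fun s : ℝ =>
      ∑ i, (hρ.eigenvalues i + s) * (Real.log (hρ.eigenvalues i + s) - Real.log s) -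
        ∑ i, (eigenDiag hσ ρ i + s) * (Real.log (hσ.eigenvalues i + s) - Real.log s)) atTop
      (𝓝 (ρ - σ).trace.re) := by
    rw [trace_sub, Complex.sub_re, ← htrace hρ, ← htrace hσ]
    exact (tendsto_finsetSum _ fun i _ => tendsto_add_mul_log_add_sub_log _ _).sub
      (tendsto_finsetSum _ fun i _ => tendsto_add_mul_log_add_sub_log _ _)
  refine hlim.congr fun s => ?_
  rw [relEnt_add_smul_one hρ hσ]
  simp only [mul_sub, Finset.sum_sub_distrib, ← Finset.sum_mul, Finset.sum_add_distrib,
    htrace, sum_eigenDiag]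
  ring

lemma integrableOn_logDetDiv_add_smul_one (hρ : ρ.PosSemidef) (hσ : σ.PosSemidef)
    (hker : ∀ v, σ *ᵥ v = 0 → ρ *ᵥ v = 0) :
    IntegrableOn (fun s : ℝ => logDetDiv (ρ + s • 1) (σ + s • 1)) (Ioi 0) := by
  have h := integrableOn_Ioi_deriv_of_nonpos
    (continuousAt_relEnt_add_smul_one hρ.isHermitian hσ.isHermitian hker).continuousWithinAt
    (fun s hs => hasDerivAt_relEnt_add_smul_one hρ hσ hs)
    (fun s hs => neg_nonpos.2
      (logDetDiv_nonneg (posDef_add_smul_one hρ hs) (posDef_add_smul_one hσ hs)))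
    (tendsto_relEnt_add_smul_one_atTop hρ.isHermitian hσ.isHermitian)
  exact integrable_neg_iff.1 h

lemma relEnt_eq_trace_add_integral_logDetDiv (hρ : ρ.PosSemidef) (hσ : σ.PosSemidef)
    (hker : ∀ v, σ *ᵥ v = 0 → ρ *ᵥ v = 0) :
    relEnt ρ σ =
      (ρ - σ).trace.re + ∫ s in Ioi (0 : ℝ), logDetDiv (ρ + s • 1) (σ + s • 1) := by
  have h := integral_Ioi_of_hasDerivAt_of_tendsto
    (continuousAt_relEnt_add_smul_one hρ.isHermitian hσ.isHermitian hker).continuousWithinAt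
    (fun s hs => hasDerivAt_relEnt_add_smul_one hρ hσ hs)
    (integrableOn_logDetDiv_add_smul_one hρ hσ hker).neg
    (tendsto_relEnt_add_smul_one_atTop hρ.isHermitian hσ.isHermitian)
  rw [integral_neg, zero_smul, add_zero, add_zero] at h
  linarith

end ShiftedRelEnt

section FubiniTonelli

lemma integral_integral_swap_of_nonneg {α β : Type*} [MeasurableSpace α] [MeasurableSpace β]
    {μ : Measure α} {ν : Measure β} [SFinite μ] [SFinite ν] {f : α → β → ℝ}
    (hf : AEStronglyMeasurable (Function.uncurry f) (μ.prod ν))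
    (hf_nonneg : ∀ᵐ x ∂μ, ∀ᵐ y ∂ν, 0 ≤ f x y) (hf_int : ∀ᵐ x ∂μ, Integrable (f x) ν)
    (hf_int' : Integrable (fun x => ∫ y, f x y ∂ν) μ) :
    ∫ x, ∫ y, f x y ∂ν ∂μ = ∫ y, ∫ x, f x y ∂μ ∂ν := by
  refine integral_integral_swap ((integrable_prod_iff hf).2 ⟨hf_int, hf_int'.congr ?_⟩)
  filter_upwards [hf_nonneg] with x hx
  exact integral_congr_ae (hx.mono fun y hy => (Real.norm_of_nonneg hy).symm)

variable {n : Type*} [Fintype n] [DecidableEq n] {P Q : Matrix n n ℂ}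

lemma integral_logDetDiv_add_smul_one (hP : P.PosSemidef) (hQ : Q.PosSemidef)
    (hint : IntegrableOn (fun s : ℝ => logDetDiv (P + s • 1) (Q + s • 1)) (Ioi 0)) :
    ∫ s in Ioi (0 : ℝ), logDetDiv (P + s • 1) (Q + s • 1) =
      ∫ t in (0 : ℝ)..1, (1 - t) *
        ∫ s in Ioi (0 : ℝ), logDetHess (Q + t • (P - Q) + s • 1) (P - Q) := by
  let f : ℝ → ℝ → ℝ := fun s t => (1 - t) * logDetHess (Q + t • (P - Q) + s • 1) (P - Q)
  have hpos : ∀ s ∈ Ioi (0 : ℝ), ∀ t ∈ Icc (0 : ℝ) 1, (Q + t • (P - Q) + s • 1).PosDef := by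
    intro s hs t ht
    simpa [add_right_comm] using
      posDef_add_smul_sub (posDef_add_smul_one hP hs) (posDef_add_smul_one hQ hs) ht
  have hcont : ContinuousOn (Function.uncurry f) (Ioi 0 ×ˢ Icc 0 1) := fun ⟨s, t⟩ ⟨hs, ht⟩ => by
    have hhess := (continuousAt_logDetHess (hpos s hs t ht).isUnit (P - Q)).comp
      (f := fun p : ℝ × ℝ => Q + p.2 • (P - Q) + p.1 • 1) (x := (s, t)) (by fun_prop)
    exact ((continuousAt_const.sub continuousAt_snd).mul hhess).continuousWithinAt
  have hinner : ∀ s ∈ Ioi (0 : ℝ),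
      logDetDiv (P + s • 1) (Q + s • 1) = ∫ t in Ioc (0 : ℝ) 1, f s t := by
    intro s hs
    rw [logDetDiv_eq_integral (posDef_add_smul_one hP hs) (posDef_add_smul_one hQ hs),
      add_sub_add_right_eq_sub, intervalIntegral.integral_of_le zero_le_one]
    simp only [f, add_right_comm]
  simp only [intervalIntegral.integral_of_le zero_le_one, ← integral_const_mul]
  rw [setIntegral_congr_fun measurableSet_Ioi hinner]
  refine integral_integral_swap_of_nonneg ?_ ?_ ?_ (hint.congr_fun hinner measurableSet_Ioi)
  · rw [Measure.prod_restrict]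
    exact (hcont.mono (prod_mono_right Ioc_subset_Icc_self)).aestronglyMeasurable
      (measurableSet_Ioi.prod measurableSet_Ioc)
  · filter_upwards [ae_restrict_mem measurableSet_Ioi] with s hs
    filter_upwards [ae_restrict_mem measurableSet_Ioc] with t ht
    exact mul_nonneg (sub_nonneg.2 ht.2)
      (logDetHess_nonneg (hpos s hs t (Ioc_subset_Icc_self ht)) _)
  · filter_upwards [ae_restrict_mem measurableSet_Ioi] with s hs
    have hslice : ContinuousOn (f s) (Icc 0 1) :=
      hcont.comp (f := Prod.mk s) (by fun_prop) fun t ht => ⟨hs, ht⟩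
    exact hslice.integrableOn_Icc.mono_set Ioc_subset_Icc_self

end FubiniTonelli

lemma bkm_eq_integral_logDetHess (ω X : Matrix (Fin d) (Fin d) ℂ) :
    bkm ω X = ∫ s in Ioi (0 : ℝ), logDetHess (ω + s • 1) X := by
  simp only [bkm, logDetHess, Complex.coe_smul]

/-- Since `Real.log 0 = 0`, `mlog` takes the logarithm on the support, and `hker` says that the
support of `ρ` lies in that of `σ`: exactly the case in which `D(ρ‖σ)` is finite. -/
theorem relEnt_eq_integral_bkm_general {ρ σ : Matrix (Fin d) (Fin d) ℂ} (hρ : ρ.PosSemidef)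
    (hσ : σ.PosSemidef) (hker : ∀ v, σ *ᵥ v = 0 → ρ *ᵥ v = 0) :
    relEnt ρ σ = (ρ - σ).trace.re +
      ∫ t in (0 : ℝ)..1, (1 - t) * bkm ((t : ℂ) • ρ + ((1 - t : ℝ) : ℂ) • σ) (ρ - σ) := by
  have hline : ∀ t : ℝ, (t : ℂ) • ρ + ((1 - t : ℝ) : ℂ) • σ = σ + t • (ρ - σ) := fun t => by
    simp only [Complex.coe_smul]
    module
  simp only [hline, bkm_eq_integral_logDetHess]
  rw [relEnt_eq_trace_add_integral_logDetDiv hρ hσ hker, integral_logDetDiv_add_smul_one hρ hσ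
    (integrableOn_logDetDiv_add_smul_one hρ hσ hker)]

/-- the integral representation
`D(ρ‖σ) = ∫₀¹ (1−t)·γ_{ρ_t}(ρ−σ) dt` with `ρ_t = tρ + (1−t)σ`. -/
theorem relEnt_eq_integral_bkm
    (ρ σ : Matrix (Fin d) (Fin d) ℂ) (hρ : ρ.PosDef) (hσ : σ.PosDef)
    (hρ1 : ρ.trace = 1) (hσ1 : σ.trace = 1) :
    relEnt ρ σ =
      ∫ t in (0 : ℝ)..1, (1 - t) * bkm ((t : ℂ) • ρ + ((1 - t : ℝ) : ℂ) • σ) (ρ - σ) := by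
  have hker : ∀ v, σ *ᵥ v = 0 → ρ *ᵥ v = 0 := fun v hv => by
    rw [mulVec_injective_of_isUnit hσ.isUnit (hv.trans (mulVec_zero σ).symm), mulVec_zero]
  rw [relEnt_eq_integral_bkm_general hρ.posSemidef hσ.posSemidef hker, trace_sub, hρ1, hσ1,
    sub_self, Complex.zero_re, zero_add]
end
end

section
/- Let t ↦ ρ_t be a smooth curve of positive definite d×d density matrices on an open interval, and define F(t) = tr(ρ_t log ρ_t). Then F′(t) = tr(ρ_t′ (log ρ_t + 1)) and F″(t) = tr(ρ_t″ (log ρ_t + 1)) + γ_{ρ_t}(ρ_t′), where γ_ρ(X) = ∫₀^∞ tr(X*(ρ+s)^{-1} X (ρ+s)^{-1}) ds. -/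
open Matrix MeasureTheory Set
open scoped ComplexOrder

attribute [local instance] Matrix.normedAddCommGroup Matrix.normedSpace

noncomputable section

variable {d : ℕ}

/-!
For a strictly positive element `a` of a C⋆-algebra, put `R_a(s) = (a + s)⁻¹`. Integrating
`log x = ∫₀^∞ ((1 + s)⁻¹ - (x + s)⁻¹) ds` over the spectrum of `a` gives
`log a = ∫₀^∞ ((1 + s)⁻¹ - R_a(s)) ds`. Two applications of the resolvent identity
`R_a - R_b = R_a (b - a) R_b` turn `log b - log a - ∫₀^∞ R_a(s) (b - a) R_a(s) ds` into an integral
that is quadratic in `b - a`, and `‖R_a(s)‖ ≤ (c + s)⁻¹` for `a ≥ c > 0` bounds it by a constant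
times `‖b - a‖²`. So `log` has derivative `L_a x = ∫₀^∞ R_a(s) x R_a(s) ds` at `a`.

Differentiating `log (r a) = log r + log a` at `r = 1` gives `L_a a = 1`. A tracial functional `τ`
satisfies `τ(y L_a x) = τ(x L_a y)`, hence `τ(a L_a x) = τ(x)`, and the product rule yields the
first derivative of `τ(ρ log ρ)`. In the second derivative the term `τ(ρ' L_ρ ρ')` is the BKM form.
-/

open Filter Topology

section InverseIntegrals

theorem hasDerivAt_log_sub_log {c s : ℝ} (hc : 0 < c) (hs : 0 ≤ s) :
    HasDerivAt (fun u : ℝ => Real.log (1 + u) - Real.log (c + u)) ((1 + s)⁻¹ - (c + s)⁻¹) s := by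
  have hlog {m : ℝ} (hm : 0 < m) : HasDerivAt (fun u : ℝ => Real.log (m + u)) (m + s)⁻¹ s := by
    simpa only [one_div] using
      ((hasDerivAt_id' s).const_add m).log (add_pos_of_pos_of_nonneg hm hs).ne'
  exact (hlog one_pos).fun_sub (hlog hc)

theorem tendsto_log_sub_log_atTop (c : ℝ) :
    Tendsto (fun u : ℝ => Real.log (1 + u) - Real.log (c + u)) atTop (𝓝 0) := by
  have h (a : ℝ) := Real.tendsto_log_comp_add_sub_log a
  simpa [add_comm] using (h 1).sub (h c)

theorem integrableOn_inv_sub_inv {c : ℝ} (hc : 0 < c) :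
    IntegrableOn (fun s : ℝ => (1 + s)⁻¹ - (c + s)⁻¹) (Ioi 0) := by
  rcases le_total 1 c with h | h
  · refine integrableOn_Ioi_deriv_of_nonneg' (fun s hs => hasDerivAt_log_sub_log hc hs)
      (fun s (hs : 0 < s) => ?_) (tendsto_log_sub_log_atTop c)
    rw [sub_nonneg]
    gcongr
  · refine integrableOn_Ioi_deriv_of_nonpos' (fun s hs => hasDerivAt_log_sub_log hc hs)
      (fun s (hs : 0 < s) => ?_) (tendsto_log_sub_log_atTop c)
    rw [sub_nonpos]
    gcongr

theorem integral_inv_sub_inv {c : ℝ} (hc : 0 < c) :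
    ∫ s in Ioi (0 : ℝ), ((1 + s)⁻¹ - (c + s)⁻¹) = Real.log c := by
  rw [integral_Ioi_of_hasDerivAt_of_tendsto' (fun s hs => hasDerivAt_log_sub_log hc hs)
    (integrableOn_inv_sub_inv hc) (tendsto_log_sub_log_atTop c)]
  simp

theorem integrableOn_inv_add_pow {c : ℝ} (hc : 0 < c) {n : ℕ} (hn : 2 ≤ n) :
    IntegrableOn (fun s : ℝ => (c + s)⁻¹ ^ n) (Ioi 0) := by
  have hn' : -(n : ℝ) < -1 := by
    rw [neg_lt_neg_iff]
    exact_mod_cast hn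
  refine (integrableOn_add_rpow_Ioi_of_lt hn' (neg_neg_of_pos hc)).congr_fun
    (fun s (hs : 0 < s) => ?_) measurableSet_Ioi
  simp only [add_comm s c, Real.rpow_neg (add_pos hc hs).le, Real.rpow_natCast, inv_pow]

end InverseIntegrals

/-- The resolvent `(a + s)⁻¹`, the integrand of all the integral formulas for the logarithm. It is
`0` where `a + s` is not invertible. -/
def shiftInv {A : Type*} [Ring A] [Algebra ℝ A] (a : A) (s : ℝ) : A :=
  Ring.inverse (a + algebraMap ℝ A s)

section ShiftInv

variable {A : Type*} [CStarAlgebra A] [PartialOrder A] [StarOrderedRing A] {a b : A} {c s : ℝ}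

theorem isUnit_add_algebraMap (ha : IsStrictlyPositive a) (hs : 0 ≤ s) :
    IsUnit (a + algebraMap ℝ A s) :=
  (ha.add_nonneg (algebraMap_nonneg A hs)).isUnit

theorem shiftInv_sub_shiftInv (ha : IsStrictlyPositive a) (hb : IsStrictlyPositive b)
    (hs : 0 ≤ s) :
    shiftInv a s - shiftInv b s = shiftInv a s * (b - a) * shiftInv b s := by
  simp only [shiftInv, Ring.inverse_sub_inverse (iff_of_true (isUnit_add_algebraMap ha hs)
    (isUnit_add_algebraMap hb hs)), add_sub_add_right_eq_sub]

theorem add_ne_zero_of_mem_spectrum (ha : IsStrictlyPositive a) {x : ℝ} (hx : x ∈ spectrum ℝ a)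
    (hs : 0 ≤ s) : x + s ≠ 0 :=
  (add_pos_of_pos_of_nonneg (ha.spectrum_pos hx) hs).ne'

theorem shiftInv_eq_cfc (ha : IsStrictlyPositive a) (hs : 0 ≤ s) :
    shiftInv a s = cfc (fun x : ℝ => (x + s)⁻¹) a := by
  have hne : ∀ x ∈ spectrum ℝ a, x + s ≠ 0 := fun x hx => add_ne_zero_of_mem_spectrum ha hx hs
  rw [cfc_inv (fun x : ℝ => x + s) a hne, cfc_add_const s (fun x => x) a, cfc_id' ℝ a, shiftInv]

theorem continuousOn_shiftInv (ha : IsStrictlyPositive a) :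
    ContinuousOn (shiftInv a) (Ioi 0) := fun s (hs : 0 < s) =>
  have hinv := NormedRing.inverse_continuousAt (isUnit_add_algebraMap ha hs.le).unit
  (hinv.comp (f := fun s : ℝ => a + algebraMap ℝ A s) (by fun_prop)).continuousWithinAt

theorem exists_pos_algebraMap_le (ha : IsStrictlyPositive a) :
    ∃ c : ℝ, 0 < c ∧ algebraMap ℝ A c ≤ a := by
  rcases subsingleton_or_nontrivial A with h | h
  · exact ⟨1, one_pos, (Subsingleton.elim _ _).le⟩
  · exact (CFC.exists_pos_algebraMap_le_iff ha.isSelfAdjoint).2 fun x hx => ha.spectrum_pos hx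

theorem norm_shiftInv_le (hc : 0 < c) (ha : algebraMap ℝ A c ≤ a) (hs : 0 ≤ s) :
    ‖shiftInv a s‖ ≤ (c + s)⁻¹ := by
  have hpos := (isStrictlyPositive_algebraMap hc).of_le ha
  rw [shiftInv_eq_cfc hpos hs]
  refine norm_cfc_le (by positivity) fun x hx => ?_
  have hcx : c ≤ x := (algebraMap_le_iff_le_spectrum (p := IsSelfAdjoint)).1 ha x hx
  have hx : 0 < x := hc.trans_le hcx
  rw [Real.norm_of_nonneg (by positivity)]
  gcongr

end ShiftInv

section LogIntegral

theorem abs_inv_sub_inv_le_max {m M x s : ℝ} (hm : 0 < m) (hmx : m ≤ x) (hxM : x ≤ M)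
    (hs : 0 ≤ s) :
    |(1 + s)⁻¹ - (x + s)⁻¹| ≤
      max |(1 + s)⁻¹ - (m + s)⁻¹| |(1 + s)⁻¹ - (M + s)⁻¹| := by
  have hx : 0 < x := hm.trans_le hmx
  exact abs_le_max_abs_abs (by gcongr) (by gcongr)

theorem continuousOn_inv_sub_inv {S : Set ℝ} (hS : S ⊆ Ioi 0) :
    ContinuousOn (Function.uncurry fun s x : ℝ => (1 + s)⁻¹ - (x + s)⁻¹) (Ioi 0 ×ˢ S) := by
  refine ContinuousOn.sub (ContinuousOn.inv₀ (by fun_prop) fun p hp => ?_)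
    (ContinuousOn.inv₀ (by fun_prop) fun p hp => ?_)
  · exact (add_pos one_pos hp.1).ne'
  · exact (add_pos (hS hp.2) hp.1).ne'

variable {A : Type*} [CStarAlgebra A] [PartialOrder A] [StarOrderedRing A] {a b : A}

theorem exists_pos_spectrum_subset_Icc (ha : IsStrictlyPositive a) :
    ∃ m M : ℝ, 0 < m ∧ 0 < M ∧ spectrum ℝ a ⊆ Icc m M := by
  obtain ⟨m, hm, hma⟩ := exists_pos_algebraMap_le ha
  have hsa : IsSelfAdjoint a := ha.isSelfAdjoint
  have hlower := (algebraMap_le_iff_le_spectrum hsa).1 hma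
  have hupper := (le_algebraMap_iff_spectrum_le hsa).1 hsa.le_algebraMap_norm_self
  exact ⟨m, max m ‖a‖, hm, lt_max_of_lt_left hm,
    fun x hx => ⟨hlower x hx, le_max_of_le_right (hupper x hx)⟩⟩

theorem exists_integrableOn_bound_inv_sub_inv (ha : IsStrictlyPositive a) :
    ∃ g : ℝ → ℝ, IntegrableOn g (Ioi 0) ∧ ∀ᵐ s ∂volume.restrict (Ioi 0),
      ∀ x ∈ spectrum ℝ a, ‖(1 + s)⁻¹ - (x + s)⁻¹‖ ≤ g s := by
  obtain ⟨m, M, hm, hM, hmM⟩ := exists_pos_spectrum_subset_Icc ha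
  refine ⟨_, (integrableOn_inv_sub_inv hm).abs.sup (integrableOn_inv_sub_inv hM).abs,
    ae_restrict_of_forall_mem measurableSet_Ioi fun s hs x hx => ?_⟩
  exact abs_inv_sub_inv_le_max hm (hmM hx).1 (hmM hx).2 (le_of_lt hs)

theorem cfc_inv_sub_inv (ha : IsStrictlyPositive a) {s : ℝ} (hs : 0 ≤ s) :
    cfc (fun x : ℝ => (1 + s)⁻¹ - (x + s)⁻¹) a =
      algebraMap ℝ A (1 + s)⁻¹ - shiftInv a s := by
  have hne : ∀ x ∈ spectrum ℝ a, x + s ≠ 0 := fun x hx => add_ne_zero_of_mem_spectrum ha hx hs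
  rw [shiftInv_eq_cfc ha hs,
    cfc_sub (fun _ => (1 + s)⁻¹) (fun x => (x + s)⁻¹) a continuousOn_const
      (ContinuousOn.inv₀ (by fun_prop) hne), cfc_const (1 + s)⁻¹ a]

theorem integrableOn_algebraMap_sub_shiftInv (ha : IsStrictlyPositive a) :
    IntegrableOn (fun s => algebraMap ℝ A (1 + s)⁻¹ - shiftInv a s) (Ioi 0) := by
  obtain ⟨g, hg, hbound⟩ := exists_integrableOn_bound_inv_sub_inv ha
  have hcont := continuousOn_inv_sub_inv fun x (hx : x ∈ spectrum ℝ a) => ha.spectrum_pos hx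
  exact (integrableOn_cfc measurableSet_Ioi _ g a hcont hbound hg.hasFiniteIntegral).congr_fun
    (fun s hs => cfc_inv_sub_inv ha (le_of_lt hs)) measurableSet_Ioi

theorem cfcLog_eq_integral_shiftInv (ha : IsStrictlyPositive a) :
    CFC.log a = ∫ s in Ioi (0 : ℝ), (algebraMap ℝ A (1 + s)⁻¹ - shiftInv a s) := by
  obtain ⟨g, hg, hbound⟩ := exists_integrableOn_bound_inv_sub_inv ha
  have hcont := continuousOn_inv_sub_inv fun x (hx : x ∈ spectrum ℝ a) => ha.spectrum_pos hx
  calc CFC.log a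
    _ = cfc (fun x : ℝ => ∫ s in Ioi 0, ((1 + s)⁻¹ - (x + s)⁻¹)) a :=
      cfc_congr fun x hx => (integral_inv_sub_inv (ha.spectrum_pos hx)).symm
    _ = ∫ s in Ioi 0, cfc (fun x : ℝ => (1 + s)⁻¹ - (x + s)⁻¹) a :=
      cfc_setIntegral measurableSet_Ioi _ g a hcont hbound hg.hasFiniteIntegral
    _ = _ := setIntegral_congr_fun measurableSet_Ioi fun s hs => cfc_inv_sub_inv ha (le_of_lt hs)

theorem cfcLog_sub_cfcLog_eq_integral (ha : IsStrictlyPositive a) (hb : IsStrictlyPositive b) :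
    CFC.log b - CFC.log a = ∫ s in Ioi 0, shiftInv a s * (b - a) * shiftInv b s := by
  rw [cfcLog_eq_integral_shiftInv ha, cfcLog_eq_integral_shiftInv hb,
    ← integral_sub (integrableOn_algebraMap_sub_shiftInv hb)
      (integrableOn_algebraMap_sub_shiftInv ha)]
  refine setIntegral_congr_fun measurableSet_Ioi fun s hs => ?_
  rw [sub_sub_sub_cancel_left, shiftInv_sub_shiftInv ha hb (le_of_lt hs)]

end LogIntegral

/-- The derivative of the logarithm at `a`, namely `x ↦ ∫₀^∞ (a + s)⁻¹ x (a + s)⁻¹ ds`. The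
integral is taken in the space of continuous linear maps, which builds in linearity. -/
def logFDeriv {A : Type*} [NormedRing A] [NormedAlgebra ℝ A] (a : A) : A →L[ℝ] A :=
  ∫ s in Ioi (0 : ℝ), ContinuousLinearMap.mulLeftRight ℝ A (shiftInv a s) (shiftInv a s)

section LogFDeriv

variable {A : Type*} [CStarAlgebra A] [PartialOrder A] [StarOrderedRing A] {a b : A} {c : ℝ}

theorem integrableOn_mulLeftRight_shiftInv (ha : IsStrictlyPositive a)
    (hb : IsStrictlyPositive b) :
    IntegrableOn (fun s => ContinuousLinearMap.mulLeftRight ℝ A (shiftInv a s) (shiftInv b s))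
      (Ioi 0) := by
  obtain ⟨m, hm, hma⟩ := exists_pos_algebraMap_le ha
  obtain ⟨n, hn, hnb⟩ := exists_pos_algebraMap_le hb
  have hcont := ((ContinuousLinearMap.mulLeftRight ℝ A).continuous.comp_continuousOn
    (continuousOn_shiftInv ha)).clm_apply (continuousOn_shiftInv hb)
  have hdom : IntegrableOn (fun s => (m + s)⁻¹ ^ 2 + (n + s)⁻¹ ^ 2) (Ioi 0) :=
    (integrableOn_inv_add_pow hm le_rfl).add (integrableOn_inv_add_pow hn le_rfl)
  refine hdom.mono' (hcont.aestronglyMeasurable measurableSet_Ioi)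
    (ae_restrict_of_forall_mem measurableSet_Ioi fun s (hs : 0 < s) => ?_)
  calc ‖ContinuousLinearMap.mulLeftRight ℝ A (shiftInv a s) (shiftInv b s)‖
    _ ≤ ‖shiftInv a s‖ * ‖shiftInv b s‖ :=
      ContinuousLinearMap.opNorm_mulLeftRight_apply_apply_le ℝ A _ _
    _ ≤ (m + s)⁻¹ * (n + s)⁻¹ :=
      mul_le_mul (norm_shiftInv_le hm hma hs.le) (norm_shiftInv_le hn hnb hs.le)
        (norm_nonneg _) (by positivity)
    _ ≤ (m + s)⁻¹ ^ 2 + (n + s)⁻¹ ^ 2 := by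
      nlinarith [sq_nonneg ((m + s)⁻¹ - (n + s)⁻¹), sq_nonneg ((m + s)⁻¹ + (n + s)⁻¹)]

theorem integrableOn_shiftInv_mul_mul_shiftInv (ha : IsStrictlyPositive a)
    (hb : IsStrictlyPositive b) (x : A) :
    IntegrableOn (fun s => shiftInv a s * x * shiftInv b s) (Ioi 0) :=
  (integrableOn_mulLeftRight_shiftInv ha hb).apply_continuousLinearMap x

theorem logFDeriv_apply (ha : IsStrictlyPositive a) (x : A) :
    logFDeriv a x = ∫ s in Ioi 0, shiftInv a s * x * shiftInv a s := by
  simp only [logFDeriv, ContinuousLinearMap.integral_apply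
    (integrableOn_mulLeftRight_shiftInv ha ha), ContinuousLinearMap.mulLeftRight_apply]

theorem cfcLog_sub_cfcLog_sub_logFDeriv_eq_integral (ha : IsStrictlyPositive a)
    (hb : IsStrictlyPositive b) :
    CFC.log b - CFC.log a - logFDeriv a (b - a) =
      ∫ s in Ioi 0, shiftInv a s * (b - a) * (shiftInv b s * (a - b) * shiftInv a s) := by
  rw [cfcLog_sub_cfcLog_eq_integral ha hb, logFDeriv_apply ha, ← integral_sub
    (integrableOn_shiftInv_mul_mul_shiftInv ha hb _)
    (integrableOn_shiftInv_mul_mul_shiftInv ha ha _)]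
  refine setIntegral_congr_fun measurableSet_Ioi fun s hs => ?_
  rw [← shiftInv_sub_shiftInv hb ha (le_of_lt hs), mul_sub (_ * _)]

theorem norm_cfcLog_sub_cfcLog_sub_logFDeriv_le (hc : 0 < c) (ha : algebraMap ℝ A c ≤ a)
    (hb : algebraMap ℝ A c ≤ b) :
    ‖CFC.log b - CFC.log a - logFDeriv a (b - a)‖ ≤
      (∫ s in Ioi 0, (c + s)⁻¹ ^ 3) * ‖b - a‖ ^ 2 := by
  have hcpos : IsStrictlyPositive (algebraMap ℝ A c) := isStrictlyPositive_algebraMap hc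
  rw [cfcLog_sub_cfcLog_sub_logFDeriv_eq_integral (hcpos.of_le ha) (hcpos.of_le hb),
    ← integral_mul_const]
  refine norm_integral_le_of_norm_le ((integrableOn_inv_add_pow hc (by norm_num)).mul_const _)
    (ae_restrict_of_forall_mem measurableSet_Ioi fun s (hs : 0 < s) => ?_)
  have hRa := norm_shiftInv_le hc ha hs.le
  have hRb := norm_shiftInv_le hc hb hs.le
  calc ‖shiftInv a s * (b - a) * (shiftInv b s * (a - b) * shiftInv a s)‖
    _ ≤ ‖shiftInv a s‖ * ‖b - a‖ * (‖shiftInv b s‖ * ‖a - b‖ * ‖shiftInv a s‖) := by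
      refine (norm_mul_le _ _).trans ?_
      gcongr
      · exact norm_mul_le _ _
      · exact norm_mul₃_le
    _ ≤ (c + s)⁻¹ * ‖b - a‖ * ((c + s)⁻¹ * ‖a - b‖ * (c + s)⁻¹) := by gcongr
    _ = (c + s)⁻¹ ^ 3 * ‖b - a‖ ^ 2 := by
      rw [norm_sub_rev a b]
      ring

theorem exists_eventually_algebraMap_le (ha : IsStrictlyPositive a) :
    ∃ c : ℝ, 0 < c ∧ ∀ᶠ b in 𝓝[{b | IsSelfAdjoint b}] a, algebraMap ℝ A c ≤ b := by
  obtain ⟨m, hm, hma⟩ := exists_pos_algebraMap_le ha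
  refine ⟨m / 2, half_pos hm, ?_⟩
  filter_upwards [self_mem_nhdsWithin,
    mem_nhdsWithin_of_mem_nhds (Metric.ball_mem_nhds a (half_pos hm))] with b hb hball
  have hab : -algebraMap ℝ A (m / 2) ≤ b - a := by
    refine le_trans ?_ (hb.sub ha.isSelfAdjoint).neg_algebraMap_norm_le_self
    gcongr
    exact (mem_ball_iff_norm.1 hball).le
  calc algebraMap ℝ A (m / 2)
    _ = algebraMap ℝ A m + -algebraMap ℝ A (m / 2) := by
      rw [← map_neg, ← map_add]
      congr 1
      ring
    _ ≤ a + (b - a) := add_le_add hma hab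
    _ = b := add_sub_cancel a b

-- Off the self-adjoint elements `CFC.log` takes the junk value `0`, hence the restriction.
theorem hasFDerivWithinAt_cfcLog (ha : IsStrictlyPositive a) :
    HasFDerivWithinAt CFC.log (logFDeriv a) {b | IsSelfAdjoint b} a := by
  obtain ⟨c, hc, hev⟩ := exists_eventually_algebraMap_le ha
  have hca : algebraMap ℝ A c ≤ a := hev.self_of_nhdsWithin ha.isSelfAdjoint
  have hbound : ∀ᶠ b in 𝓝[{b | IsSelfAdjoint b}] a,
      ‖CFC.log b - CFC.log a - logFDeriv a (b - a)‖ ≤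
        (∫ s in Ioi 0, (c + s)⁻¹ ^ 3) * ‖‖b - a‖ ^ 2‖ := by
    filter_upwards [hev] with b hb
    rw [norm_pow, norm_norm]
    exact norm_cfcLog_sub_cfcLog_sub_logFDeriv_le hc hca hb
  exact .of_isLittleO ((Asymptotics.IsBigO.of_bound _ hbound).trans_isLittleO
    ((Asymptotics.isLittleO_pow_sub_sub a one_lt_two).mono nhdsWithin_le_nhds))

theorem hasDerivAt_cfcLog_comp {γ : ℝ → A} {γ' : A} {t : ℝ} (hγ : HasDerivAt γ γ' t)
    (hpos : IsStrictlyPositive (γ t)) (hsa : ∀ᶠ s in 𝓝 t, IsSelfAdjoint (γ s)) :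
    HasDerivAt (fun s => CFC.log (γ s)) (logFDeriv (γ t) γ') t :=
  (hasFDerivWithinAt_cfcLog hpos).comp_hasDerivAt t hγ hsa

theorem logFDeriv_self (ha : IsStrictlyPositive a) : logFDeriv a a = 1 := by
  have hray : HasDerivAt (fun r : ℝ => r • a) a 1 := by
    simpa using (hasDerivAt_id (1 : ℝ)).smul_const a
  have hlog : HasDerivAt (fun r : ℝ => CFC.log (r • a)) (logFDeriv a a) 1 := by
    simpa using hasDerivAt_cfcLog_comp hray (by simpa using ha)
      (.of_forall fun r => (IsSelfAdjoint.all r).smul ha.isSelfAdjoint)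
  have hadd : HasDerivAt (fun r : ℝ => algebraMap ℝ A (Real.log r) + CFC.log a) 1 1 := by
    simpa using (((algebraMapCLM ℝ A).hasFDerivAt.comp_hasDerivAt (1 : ℝ)
      (Real.hasDerivAt_log one_ne_zero)).add_const (CFC.log a))
  refine hlog.unique (hadd.congr_of_eventuallyEq ?_)
  filter_upwards [lt_mem_nhds one_pos] with r hr using CFC.log_smul' a hr

end LogFDeriv

/-- The Bogoliubov–Kubo–Mori quadratic form `∫₀^∞ τ(x* (a + s)⁻¹ x (a + s)⁻¹) ds` of a tracial
functional `τ`. It generalises `bkm`, the case where `τ` is the real part of the matrix trace. -/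
def tracialBKM {A : Type*} [NormedRing A] [NormedAlgebra ℝ A] [Star A] (τ : A →L[ℝ] ℝ)
    (a x : A) : ℝ :=
  ∫ s in Ioi (0 : ℝ), τ (star x * shiftInv a s * x * shiftInv a s)

theorem isSelfAdjoint_of_hasDerivAt {F : Type*} [NormedAddCommGroup F] [NormedSpace ℝ F]
    [StarAddMonoid F] [StarModule ℝ F] [ContinuousStar F] {γ : ℝ → F} {γ' : F} {t : ℝ}
    (hγ : HasDerivAt γ γ' t) (hsa : ∀ᶠ s in 𝓝 t, IsSelfAdjoint (γ s)) : IsSelfAdjoint γ' :=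
  (hγ.star.congr_of_eventuallyEq (hsa.mono fun _ hs => hs.star_eq.symm)).unique hγ

section Tracial

variable {A : Type*} [CStarAlgebra A] [PartialOrder A] [StarOrderedRing A] {a : A}
  (τ : A →L[ℝ] ℝ)

theorem map_mul_logFDeriv_eq_integral (ha : IsStrictlyPositive a) (x y : A) :
    τ (y * logFDeriv a x) = ∫ s in Ioi 0, τ (y * shiftInv a s * x * shiftInv a s) := by
  rw [logFDeriv_apply ha]
  simpa only [mul_assoc, ContinuousLinearMap.comp_apply, ContinuousLinearMap.mul_apply'] using
    ((τ.comp (ContinuousLinearMap.mul ℝ A y)).integral_comp_comm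
      (integrableOn_shiftInv_mul_mul_shiftInv ha ha x)).symm

theorem map_star_mul_logFDeriv (ha : IsStrictlyPositive a) (x : A) :
    τ (star x * logFDeriv a x) = tracialBKM τ a x :=
  map_mul_logFDeriv_eq_integral τ ha x (star x)

variable {τ}

theorem map_mul_logFDeriv_comm (hτ : ∀ x y, τ (x * y) = τ (y * x)) (ha : IsStrictlyPositive a)
    (x y : A) : τ (y * logFDeriv a x) = τ (x * logFDeriv a y) := by
  simp only [map_mul_logFDeriv_eq_integral τ ha]
  refine setIntegral_congr_fun measurableSet_Ioi fun s _ => ?_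
  simpa only [mul_assoc] using hτ (y * shiftInv a s) (x * shiftInv a s)

theorem map_mul_logFDeriv_self (hτ : ∀ x y, τ (x * y) = τ (y * x)) (ha : IsStrictlyPositive a)
    (x : A) : τ (a * logFDeriv a x) = τ x := by
  rw [map_mul_logFDeriv_comm hτ ha, logFDeriv_self ha, mul_one]

variable {ρ : ℝ → A} {ρ' : A} {t : ℝ}

theorem hasDerivAt_map_mul_cfcLog (hτ : ∀ x y, τ (x * y) = τ (y * x))
    (hρ : HasDerivAt ρ ρ' t) (hpos : IsStrictlyPositive (ρ t))
    (hsa : ∀ᶠ s in 𝓝 t, IsSelfAdjoint (ρ s)) :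
    HasDerivAt (fun s => τ (ρ s * CFC.log (ρ s))) (τ (ρ' * (CFC.log (ρ t) + 1))) t := by
  refine (τ.hasFDerivAt.comp_hasDerivAt t
    (hρ.mul (hasDerivAt_cfcLog_comp hρ hpos hsa))).congr_deriv ?_
  rw [map_add, map_mul_logFDeriv_self hτ hpos, mul_add, mul_one, map_add]

theorem hasDerivAt_map_mul_cfcLog_add_one {σ : ℝ → A} {σ' : A}
    (hρ : HasDerivAt ρ (σ t) t) (hσ : HasDerivAt σ σ' t) (hpos : IsStrictlyPositive (ρ t))
    (hsa : ∀ᶠ s in 𝓝 t, IsSelfAdjoint (ρ s)) :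
    HasDerivAt (fun s => τ (σ s * (CFC.log (ρ s) + 1)))
      (τ (σ' * (CFC.log (ρ t) + 1)) + tracialBKM τ (ρ t) (σ t)) t := by
  refine (τ.hasFDerivAt.comp_hasDerivAt t
    (hσ.mul ((hasDerivAt_cfcLog_comp hρ hpos hsa).add_const 1))).congr_deriv ?_
  rw [map_add, ← map_star_mul_logFDeriv τ hpos,
    (isSelfAdjoint_of_hasDerivAt hρ hsa).star_eq]

theorem entropy_derivatives_along_curve_general (hτ : ∀ x y, τ (x * y) = τ (y * x))
    {U : Set ℝ} (hU : IsOpen U) {ρ ρ' ρ'' : ℝ → A}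
    (hpos : ∀ t ∈ U, IsStrictlyPositive (ρ t))
    (hderiv1 : ∀ t ∈ U, HasDerivAt ρ (ρ' t) t)
    (hderiv2 : ∀ t ∈ U, HasDerivAt ρ' (ρ'' t) t) :
    ∀ t ∈ U,
      HasDerivAt (fun s => τ (ρ s * CFC.log (ρ s))) (τ (ρ' t * (CFC.log (ρ t) + 1))) t ∧
      HasDerivAt (fun s => τ (ρ' s * (CFC.log (ρ s) + 1)))
        (τ (ρ'' t * (CFC.log (ρ t) + 1)) + tracialBKM τ (ρ t) (ρ' t)) t := by
  intro t ht
  have hsa : ∀ᶠ s in 𝓝 t, IsSelfAdjoint (ρ s) := by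
    filter_upwards [hU.mem_nhds ht] with s hs using (hpos s hs).isSelfAdjoint
  exact ⟨hasDerivAt_map_mul_cfcLog hτ (hderiv1 t ht) (hpos t ht) hsa,
    hasDerivAt_map_mul_cfcLog_add_one (hderiv1 t ht) (hderiv2 t ht) (hpos t ht) hsa⟩

end Tracial

section MatrixTrace

open scoped Matrix.Norms.L2Operator

variable {n : Type*} [Fintype n] [DecidableEq n]

theorem mlog_eq_cfcLog (A : Matrix (Fin d) (Fin d) ℂ) : mlog A = CFC.log A := by
  by_cases hA : A.IsHermitian
  · rw [mlog, dif_pos hA, CFC.log, hA.cfc_eq]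
    rfl
  · rw [mlog, dif_neg hA, CFC.log]
    exact (cfc_apply_of_not_predicate A hA).symm

theorem nonsing_inv_add_smul_one_eq_shiftInv (A : Matrix n n ℂ) (s : ℝ) :
    (A + (s : ℂ) • (1 : Matrix n n ℂ))⁻¹ = shiftInv A s := by
  rw [nonsing_inv_eq_ringInverse, shiftInv, Algebra.algebraMap_eq_smul_one, Complex.coe_smul]

/-- The real part of the matrix trace, as a continuous functional: the tracial functional whose
Bogoliubov–Kubo–Mori form is `bkm`. -/
def reTrace (n : Type*) [Fintype n] [DecidableEq n] : Matrix n n ℂ →L[ℝ] ℝ :=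
  LinearMap.toContinuousLinearMap (Complex.reLm ∘ₗ (traceLinearMap n ℂ ℂ).restrictScalars ℝ)

theorem reTrace_apply (A : Matrix n n ℂ) : reTrace n A = A.trace.re := rfl

theorem reTrace_mul_comm (A B : Matrix n n ℂ) : reTrace n (A * B) = reTrace n (B * A) := by
  simp only [reTrace_apply, trace_mul_comm A B]

theorem bkm_eq_tracialBKM (A X : Matrix (Fin d) (Fin d) ℂ) :
    bkm A X = tracialBKM (reTrace (Fin d)) A X := by
  simp only [bkm, tracialBKM, nonsing_inv_add_smul_one_eq_shiftInv, reTrace_apply,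
    star_eq_conjTranspose]

end MatrixTrace

/-- first and second derivatives of the entropy functional
`F(t) = tr(ρ_t log ρ_t)` along a smooth curve of positive definite density matrices:
`F′(t) = tr(ρ_t′(log ρ_t + 1))` and `F″(t) = tr(ρ_t″(log ρ_t + 1)) + γ_{ρ_t}(ρ_t′)`. -/
theorem entropy_derivatives_along_curve
    (a b : ℝ) (ρ ρ' ρ'' : ℝ → Matrix (Fin d) (Fin d) ℂ)
    (hpos : ∀ t ∈ Ioo a b, (ρ t).PosDef)
    (htr : ∀ t ∈ Ioo a b, (ρ t).trace = 1)
    (hderiv1 : ∀ t ∈ Ioo a b, HasDerivAt ρ (ρ' t) t)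
    (hderiv2 : ∀ t ∈ Ioo a b, HasDerivAt ρ' (ρ'' t) t) :
    ∀ t ∈ Ioo a b,
      HasDerivAt (fun s => ((ρ s * mlog (ρ s)).trace).re)
        (((ρ' t * (mlog (ρ t) + 1)).trace).re) t ∧
      HasDerivAt (fun s => ((ρ' s * (mlog (ρ s) + 1)).trace).re)
        ((((ρ'' t) * (mlog (ρ t) + 1)).trace).re + bkm (ρ t) (ρ' t)) t := by
  -- The operator norm may replace the entrywise norm: `HasDerivAt` depends only on the topology.
  open scoped Matrix.Norms.L2Operator MatrixOrder in
  simpa only [mlog_eq_cfcLog, bkm_eq_tracialBKM, reTrace_apply] using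
    entropy_derivatives_along_curve_general reTrace_mul_comm isOpen_Ioo
      (fun t ht => (hpos t ht).isStrictlyPositive) hderiv1 hderiv2
end
end
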